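/- Generalization error bound without knowledge transfer (Theorem 1): Let D be a probability distribution on ℝ^{d₀} × [C] × [C] whose instance marginal is supported on {x : ‖x‖₂ ≤ B}. Let (x_1, ȳ_1, y⋆_1), …, (x_m, ȳ_m, y⋆_m) be drawn i.i.d. from D, and assume the sample is class-balanced with respect to y⋆, i.e., each class k ∈ [C] appears exactly m/C times among y⋆_1, …, y⋆_m. Then for every δ ∈ (0,1), with probability at least 1 − δ over the draw of the sample, simultaneously for every T in the hypothesis class 𝒯: E_{(x,ȳ,y⋆)∼D}[ℓ(T; x, ȳ, y⋆)] − (1/m)∑_{i=1}^m ℓ(T; x_i, ȳ_i, y⋆_i) ≤ 2C²B(√(2d·log 2) + 1)·∏_{i=1}^d M_i / √(C·m) + M·√(log(1/δ)/(2m)). -/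

import Mathlib

/-!
The empirical Rademacher complexity of the loss class is at most
`C² B √(2 d log 2) ∏ Mᵢ / √(C m)`, for every sample with `‖xᵢ‖ ≤ B`, balanced or not; symmetrization
and McDiarmid's inequality then give the bound.

*The loss.* As a function of the logit differences `t_{y c} - t_{y ȳ}`, the loss is a log-sum-exp,
hence `1`-Lipschitz for the sup norm. Since `|w_c| ≤ 𝔼 |∑ εᵢ wᵢ|` for every coordinate `c`, vector
contraction (`vector_contraction`) replaces the signs in front of the losses by independent signs
in front of the logit differences, with constant `1`.

*The network.* Cauchy–Schwarz over the output layer (`linear_layer`) reduces the average to second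
moments of Rademacher sums of the last hidden layer, with coefficients of total squared mass
`2 m (C - 1)` (`coeff_mass`). These second moments are bounded by peeling in exponential form
(`peel`, `hid_exp`): for `exp (λ ‖·‖²)`, a layer reduces to a single normalized neuron, the
activation of which is a combination of `t` and `|t|` with coefficients of total mass at most `1`;
scalar contraction (`contraction`) removes it at the cost of a factor `4`. For the inputs the
moment is at most `2` if `4 λ ∑ ‖xᵢ‖² ≤ 1` (`exp_sq_le_two`), and taking a logarithm
(`hid_second_moment`) makes the dependence on the depth linear.

*The deviation.* For finite classes, `symmetrization` bounds the expected supremum of the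
deviations, and `mcdiarmid`, which follows from Hoeffding's lemma by integrating out one sample
point at a time, bounds its fluctuation (`finite_class`). The whole class follows from
separability (`uniform_bound`).
-/

open MeasureTheory

/-- Euclidean norm of a vector in `ℝ^n`. -/
noncomputable def euclNorm {n : ℕ} (v : Fin n → ℝ) : ℝ :=
  Real.sqrt (∑ i, (v i) ^ 2)

/-- Frobenius norm of a matrix. -/
noncomputable def frobeniusNorm {m n : ℕ} (W : Matrix (Fin m) (Fin n) ℝ) : ℝ :=
  Real.sqrt (∑ i, ∑ j, (W i j) ^ 2)

/-- A function `ℝ → ℝ` is positive-homogeneous if `σ (c·x) = c·σ x` for all `c ≥ 0`. -/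
def PosHomogeneous (σ : ℝ → ℝ) : Prop :=
  ∀ c : ℝ, 0 ≤ c → ∀ x : ℝ, σ (c * x) = c * σ x

/-- Forward pass of a feed-forward network: `nnForward dims W σ i x` is the output of the
`i`-th layer on input `x`, where the `i+1`-st layer applies the weight matrix `W i`
followed by the element-wise activation `σ i`. -/
noncomputable def nnForward (dims : ℕ → ℕ)
    (W : ∀ i : ℕ, Matrix (Fin (dims (i + 1))) (Fin (dims i)) ℝ)
    (σ : ℕ → ℝ → ℝ) : ∀ i : ℕ, (Fin (dims 0) → ℝ) → Fin (dims i) → ℝ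
  | 0 => fun x => x
  | i + 1 => fun x j => σ i (∑ l, W i j l * nnForward dims W σ i x l)

/-- The hypothesis class `𝒯` of transition-matrix-valued functions
`T : ℝ^{d₀} → ℝ^{C×C}` of the form `T_{pq}(x) = exp(t_{pq}(x)) / ∑_k exp(t_{pk}(x))`,
where `t(x) = W_d σ_{d−1}(W_{d−1} σ_{d−2}(⋯ σ_1(W_1 x))) ∈ ℝ^{C×C}` is a depth-`d`
network whose weight matrices have Frobenius norm at most `Mw i` and whose activation
functions are `1`-Lipschitz, positive-homogeneous, and applied element-wise. -/
def TClass (C d₀ d : ℕ) (Mw : Fin d → ℝ) :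
    Set ((Fin d₀ → ℝ) → Fin C → Fin C → ℝ) :=
  {T | ∃ dims : ℕ → ℕ, ∃ h0 : dims 0 = d₀, ∃ hd : dims d = C * C,
    ∃ W : ∀ i : ℕ, Matrix (Fin (dims (i + 1))) (Fin (dims i)) ℝ, ∃ σ : ℕ → ℝ → ℝ,
      (∀ i : Fin d, frobeniusNorm (W i) ≤ Mw i) ∧
      (∀ i : ℕ, i + 1 < d → LipschitzWith 1 (σ i) ∧ PosHomogeneous (σ i)) ∧
      σ (d - 1) = id ∧
      ∀ (x : Fin d₀ → ℝ) (p q : Fin C),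
        T x p q =
          Real.exp (nnForward dims W σ d (fun l => x (Fin.cast h0 l))
              (Fin.cast hd.symm (finProdFinEquiv (p, q)))) /
            ∑ c : Fin C, Real.exp (nnForward dims W σ d (fun l => x (Fin.cast h0 l))
              (Fin.cast hd.symm (finProdFinEquiv (p, c))))}

/-- The loss `ℓ(T; x, ȳ, y⋆) = −log T_{y⋆ ȳ}(x)` of a transition matrix `T` on an
example `z = (x, ȳ, y⋆)`. -/
noncomputable def transLoss {C d₀ : ℕ} (T : (Fin d₀ → ℝ) → Fin C → Fin C → ℝ)
    (z : (Fin d₀ → ℝ) × Fin C × Fin C) : ℝ :=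
  -Real.log (T z.1 z.2.2 z.2.1)

namespace TransBound

open scoped BigOperators

/-! ### Averages over sign vectors -/

/-- The Rademacher sign `±1` encoded by a Boolean. -/
def sg (b : Bool) : ℝ := if b then 1 else -1

lemma sg_not (b : Bool) : sg (!b) = -sg b := by cases b <;> simp [sg]

lemma abs_sg (b : Bool) : |sg b| = 1 := by cases b <;> simp [sg]

lemma expect_mono {ι : Type*} [Fintype ι] {f g : ι → ℝ} (h : ∀ i, f i ≤ g i) :
    𝔼 i, f i ≤ 𝔼 i, g i :=
  Finset.expect_le_expect fun i _ => h i

lemma expect_le_of_pair {ι : Type*} [Fintype ι] (e : ι ≃ ι) {f g : ι → ℝ}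
    (h : ∀ i, f i + f (e i) ≤ g i + g (e i)) : 𝔼 i, f i ≤ 𝔼 i, g i := by
  have hf : 𝔼 i, f (e i) = 𝔼 i, f i := Fintype.expect_equiv e _ _ fun _ => rfl
  have hg : 𝔼 i, g (e i) = 𝔼 i, g i := Fintype.expect_equiv e _ _ fun _ => rfl
  have := expect_mono h
  rw [Finset.expect_add_distrib, Finset.expect_add_distrib, hf, hg] at this
  linarith

/-- The involution of the sign cube that flips the `k`-th sign. -/
def flip {κ : Type*} [DecidableEq κ] (k : κ) : (κ → Bool) ≃ (κ → Bool) :=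
  Function.Involutive.toPerm (fun s => Function.update s k (!(s k))) (by
    intro s; ext i; by_cases h : i = k
    · subst h; simp
    · simp [h])

@[simp] lemma flip_same {κ : Type*} [DecidableEq κ] (k : κ) (s : κ → Bool) :
    flip k s k = !(s k) := by
  change Function.update s k (!(s k)) k = _
  simp

lemma flip_ne {κ : Type*} [DecidableEq κ] {k i : κ} (h : i ≠ k) (s : κ → Bool) :
    flip k s i = s i := by
  change Function.update s k (!(s k)) i = _
  simp [h]

lemma sum_flip {κ : Type*} [DecidableEq κ] {E : Type*} [AddCommGroup E] [Module ℝ E]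
    (k : κ) (s : κ → Bool) (S : Finset κ) (hk : k ∉ S) (v : κ → E) :
    ∑ i ∈ S, sg (flip k s i) • v i = ∑ i ∈ S, sg (s i) • v i :=
  Finset.sum_congr rfl fun i hi => by
    rw [flip_ne (fun h => hk (by rwa [h] at hi))]

lemma le_sup {J : Type*} [Finite J] (f : J → ℝ) (j : J) : f j ≤ ⨆ j, f j :=
  le_ciSup (Set.finite_range f).bddAbove j

lemma exists_sup {J : Type*} [Finite J] [Nonempty J] (f : J → ℝ) : ∃ j, f j = ⨆ j, f j :=
  exists_eq_ciSup_of_finite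

lemma sup_mono {J : Type*} [Finite J] [Nonempty J] {f g : J → ℝ} (h : ∀ j, f j ≤ g j) :
    ⨆ j, f j ≤ ⨆ j, g j :=
  ciSup_le fun j => (h j).trans (le_sup g j)

/-- Each coordinate is dominated by the mean absolute value of a Rademacher sum. -/
lemma abs_le_expect {κ : Type*} [Fintype κ] [DecidableEq κ] (w : κ → ℝ) (c : κ) :
    |w c| ≤ 𝔼 s : κ → Bool, |∑ i, sg (s i) * w i| := by
  have : 𝔼 _s : κ → Bool, |w c| ≤ 𝔼 s : κ → Bool, |∑ i, sg (s i) * w i| := by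
    apply expect_le_of_pair (flip c)
    intro s
    have e1 : ∀ s : κ → Bool, ∑ i, sg (s i) * w i
        = sg (s c) * w c + ∑ i ∈ Finset.univ.erase c, sg (s i) * w i := fun s =>
      (Finset.add_sum_erase _ _ (Finset.mem_univ c)).symm
    have e2 : ∑ i ∈ Finset.univ.erase c, sg (flip c s i) * w i
        = ∑ i ∈ Finset.univ.erase c, sg (s i) * w i :=
      sum_flip c s _ (by simp) w
    rw [e1 s, e1 (flip c s), e2, flip_same, sg_not, neg_mul]
    have h3 : |w c| = |sg (s c) * w c| := by rw [abs_mul, abs_sg, one_mul]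
    rw [h3]
    generalize sg (s c) * w c = x at *
    generalize ∑ i ∈ Finset.univ.erase c, sg (s i) * w i = R
    have h5 : 2 * |x| ≤ |x + R| + |-x + R| := by
      have := abs_sub (x + R) (-x + R)
      rw [show (x + R) - (-x + R) = 2 * x by ring, abs_mul, abs_two] at this
      exact this
    linarith
  simpa using this

lemma expect_cons {n : ℕ} {X : Type*} [Fintype X] (F : (Fin (n + 1) → X) → ℝ) :
    𝔼 s, F s = 𝔼 x : X, 𝔼 s : Fin n → X, F (Fin.cons x s) := by
  rw [← Fintype.expect_equiv (Fin.consEquiv fun _ => X) (fun p => F (Fin.cons p.1 p.2)) F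
    (fun _ => rfl), ← Finset.univ_product_univ, Finset.expect_product]

/-! ### Contraction principles -/

/-- Vector contraction for a single sign. Averaging over that sign turns the left-hand side into a
supremum over pairs `(j, k)`, and the symmetry of such a supremum in `j` and `k` absorbs the
absolute value in `h`. -/
lemma vector_step {J κ : Type*} [Finite J] [Nonempty J] [Fintype κ] [DecidableEq κ]
    (A a : J → ℝ) (b : J → κ → ℝ)
    (h : ∀ j k, |a j - a k| ≤ 𝔼 s : κ → Bool, |∑ c, sg (s c) * (b j c - b k c)|) :
    𝔼 e : Bool, (⨆ j, (A j + sg e * a j)) ≤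
      𝔼 s : κ → Bool, ⨆ j, (A j + ∑ c, sg (s c) * b j c) := by
  obtain ⟨j, hj⟩ := exists_sup fun j => A j + sg true * a j
  obtain ⟨k, hk⟩ := exists_sup fun j => A j + sg false * a j
  have h1 : 𝔼 e : Bool, (⨆ j, (A j + sg e * a j)) = (A j + A k + (a j - a k)) / 2 := by
    rw [Fintype.expect_eq_sum_div_card, Fintype.sum_bool, ← hj, ← hk]
    simp [sg]; ring
  have h2 : 𝔼 s : κ → Bool, (A j + A k + |∑ c, sg (s c) * (b j c - b k c)|) / 2
      ≤ 𝔼 s : κ → Bool, ⨆ j, (A j + ∑ c, sg (s c) * b j c) := by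
    let e : (κ → Bool) ≃ (κ → Bool) := Function.Involutive.toPerm (fun s i => !(s i))
      (by intro s; ext i; simp)
    apply expect_le_of_pair e
    intro s
    have e1 : ∀ v : κ → ℝ, ∑ c, sg (e s c) * v c = -∑ c, sg (s c) * v c := by
      intro v
      rw [← Finset.sum_neg_distrib]
      refine Finset.sum_congr rfl fun c _ => ?_
      rw [show e s c = !(s c) from rfl, sg_not, neg_mul]
    simp only [e1, mul_sub, Finset.sum_sub_distrib]
    rw [neg_sub_neg, abs_sub_comm (∑ c, sg (s c) * b k c)]
    have l1 := le_sup fun j => A j + ∑ c, sg (s c) * b j c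
    have l2 := le_sup fun j => A j + -∑ c, sg (s c) * b j c
    have l1j := l1 j
    have l1k := l1 k
    have l2j := l2 j
    have l2k := l2 k
    rcases abs_cases (∑ c, sg (s c) * b j c - ∑ c, sg (s c) * b k c) with h | h <;>
      linarith
  rw [h1]
  refine le_trans ?_ h2
  rw [← Finset.expect_div, Finset.expect_add_distrib, Fintype.expect_const]
  have := (le_abs_self _).trans (h j k)
  linarith

/-- Vector contraction: scalar signs in front of a function of a vector can be replaced by
independent signs in front of the coordinates. The hypothesis is weaker than Lipschitz continuity
of constant `1` for the sup norm (see `abs_le_expect`), and no constant is lost. -/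
lemma vector_contraction {J κ : Type*} [Finite J] [Nonempty J] [Fintype κ] [DecidableEq κ]
    (n : ℕ) : ∀ (A : J → ℝ) (a : J → Fin n → ℝ) (b : J → Fin n → κ → ℝ),
    (∀ i j k, |a j i - a k i| ≤ 𝔼 s : κ → Bool, |∑ c, sg (s c) * (b j i c - b k i c)|) →
    𝔼 e : Fin n → Bool, (⨆ j, (A j + ∑ i, sg (e i) * a j i)) ≤
      𝔼 s : Fin n → κ → Bool, ⨆ j, (A j + ∑ i, ∑ c, sg (s i c) * b j i c) := by
  induction n with
  | zero => intro A a b _; simp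
  | succ n ih =>
    intro A a b h
    rw [expect_cons, expect_cons, Finset.expect_comm]
    calc 𝔼 e : Fin n → Bool, 𝔼 x : Bool, (⨆ j, (A j + ∑ i, sg ((Fin.cons x e :
            Fin (n + 1) → Bool) i) * a j i))
        = 𝔼 e : Fin n → Bool, 𝔼 x : Bool, (⨆ j, ((A j + ∑ i : Fin n, sg (e i) * a j i.succ)
            + sg x * a j 0)) := by
          simp only [Fin.sum_univ_succ, Fin.cons_zero, Fin.cons_succ]
          refine Finset.expect_congr rfl fun e _ => Finset.expect_congr rfl fun x _ => ?_
          congr 1; ext j; ring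
      _ ≤ 𝔼 e : Fin n → Bool, 𝔼 s : κ → Bool,
            (⨆ j, ((A j + ∑ i : Fin n, sg (e i) * a j i.succ) + ∑ c, sg (s c) * b j 0 c)) :=
          expect_mono fun e => vector_step _ _ (fun j => b j 0) (h 0)
      _ = 𝔼 s : κ → Bool, 𝔼 e : Fin n → Bool,
            (⨆ j, ((A j + ∑ c, sg (s c) * b j 0 c) + ∑ i : Fin n, sg (e i) * a j i.succ)) := by
          rw [Finset.expect_comm]
          refine Finset.expect_congr rfl fun e _ => Finset.expect_congr rfl fun x _ => ?_
          congr 1; ext j; ring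
      _ ≤ 𝔼 s : κ → Bool, 𝔼 t : Fin n → κ → Bool,
            (⨆ j, ((A j + ∑ c, sg (s c) * b j 0 c)
              + ∑ i : Fin n, ∑ c, sg (t i c) * b j i.succ c)) :=
          expect_mono fun s => ih _ (fun j i => a j i.succ) (fun j i => b j i.succ)
            fun i => h i.succ
      _ = _ := by
          simp only [Fin.sum_univ_succ, Fin.cons_zero, Fin.cons_succ, add_assoc]

/-- Weak majorization of two pairs of reals. -/
lemma convex_pair {G : ℝ → ℝ} (hc : ConvexOn ℝ Set.univ G) (hm : Monotone G) {x y α β : ℝ}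
    (hs : x + y ≤ α + β) (hx : x ≤ max α β) (hy : y ≤ max α β) : G x + G y ≤ G α + G β := by
  wlog hab : β ≤ α generalizing α β
  · have := this (α := β) (β := α) (by linarith) (by rwa [max_comm]) (by rwa [max_comm])
      (by linarith)
    linarith
  wlog hxy : y ≤ x generalizing x y
  · have := this (x := y) (y := x) (by linarith) hy hx (by linarith)
    linarith
  rw [max_eq_left hab] at hx hy
  rcases le_or_gt y β with h | h
  · exact add_le_add (hm hx) (hm h)
  have hlt : β < α := by linarith
  have h1 : G x ≤ G (α + β - y) := hm (by linarith)
  have hd : 0 < α - β := by linarith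
  set t := (y - β) / (α - β) with ht
  have ht0 : 0 ≤ t := div_nonneg (by linarith) hd.le
  have ht1 : 0 ≤ 1 - t := by rw [sub_nonneg, ht, div_le_one hd]; linarith
  have hty : t * (α - β) = y - β := div_mul_cancel₀ _ hd.ne'
  have h2 := hc.2 (Set.mem_univ α) (Set.mem_univ β) ht0 ht1 (by ring)
  have h3 := hc.2 (Set.mem_univ α) (Set.mem_univ β) ht1 ht0 (by ring)
  simp only [smul_eq_mul] at h2 h3
  rw [show t * α + (1 - t) * β = y by linarith] at h2
  rw [show (1 - t) * α + t * β = α + β - y by linarith] at h3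
  linarith

/-- The contraction principle for a single sign. -/
lemma scalar_step {J : Type*} [Finite J] [Nonempty J] {G : ℝ → ℝ}
    (hc : ConvexOn ℝ Set.univ G) (hm : Monotone G) (A a b : J → ℝ)
    (hl : ∀ j k, |a j - a k| ≤ |b j - b k|) (h0 : ∀ j, |a j| ≤ |b j|) :
    (⨆ j, G (A j + a j)) + (⨆ j, G (A j - a j)) ≤
      (⨆ j, G (A j + b j)) + ⨆ j, G (A j - b j) := by
  obtain ⟨j, hj⟩ := exists_sup fun j => G (A j + a j)
  obtain ⟨k, hk⟩ := exists_sup fun j => G (A j - a j)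
  obtain ⟨j', hj'⟩ := exists_sup fun j => A j + b j
  obtain ⟨k', hk'⟩ := exists_sup fun j => A j - b j
  have l1 := le_sup fun j => A j + b j
  have l2 := le_sup fun j => A j - b j
  rw [← hj'] at l1
  rw [← hk'] at l2
  have g1 := le_sup (fun j => G (A j + b j)) j'
  have g2 := le_sup (fun j => G (A j - b j)) k'
  rw [← hj, ← hk]
  refine le_trans ?_ (add_le_add g1 g2)
  have hmax : ∀ i, A i + |b i| ≤ max (A j' + b j') (A k' - b k') := by
    intro i
    rcases abs_cases (b i) with h | h
    · exact le_max_of_le_left (by linarith [l1 i])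
    · exact le_max_of_le_right (by linarith [l2 i])
  apply convex_pair hc hm
  · have h1 := (le_abs_self _).trans (hl j k)
    have := l1 j; have := l1 k; have := l2 j; have := l2 k
    rcases abs_cases (b j - b k) with h | h <;> linarith
  · have := (le_abs_self _).trans (h0 j)
    linarith [hmax j]
  · have := (neg_le_abs _).trans (h0 k)
    linarith [hmax k]

/-- The contraction principle of Ledoux and Talagrand, for a convex nondecreasing `G`. -/
lemma contraction {J κ : Type*} [Finite J] [Nonempty J] [Fintype κ] [DecidableEq κ]
    {G : ℝ → ℝ} (hc : ConvexOn ℝ Set.univ G) (hm : Monotone G) (a b : J → κ → ℝ)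
    (hl : ∀ i j k, |a j i - a k i| ≤ |b j i - b k i|) (h0 : ∀ i j, |a j i| ≤ |b j i|) :
    𝔼 s : κ → Bool, (⨆ j, G (∑ i, sg (s i) * a j i)) ≤
      𝔼 s : κ → Bool, ⨆ j, G (∑ i, sg (s i) * b j i) := by
  -- The coordinates in `S` have already been replaced.
  have key : ∀ S : Finset κ, 𝔼 s : κ → Bool, (⨆ j, G (∑ i, sg (s i) * a j i)) ≤
      𝔼 s : κ → Bool, ⨆ j, G (∑ i, sg (s i) * (if i ∈ S then b j i else a j i)) := by
    intro S
    induction S using Finset.induction_on with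
    | empty => simp
    | insert k S hk ih =>
      refine ih.trans (expect_le_of_pair (flip k) fun s => ?_)
      have e1 : ∀ (s : κ → Bool) (v : κ → ℝ), ∑ i, sg (s i) * v i
          = ∑ i ∈ Finset.univ.erase k, sg (s i) * v i + sg (s k) * v k := fun s v =>
        (Finset.sum_erase_add _ _ (Finset.mem_univ k)).symm
      have e2 : ∀ v : κ → ℝ, ∑ i ∈ Finset.univ.erase k, sg (flip k s i) * v i
          = ∑ i ∈ Finset.univ.erase k, sg (s i) * v i := fun v =>
        sum_flip k s _ (by simp) v
      have e3 : ∀ j, ∑ i ∈ Finset.univ.erase k, sg (s i) *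
            (if i ∈ insert k S then b j i else a j i)
          = ∑ i ∈ Finset.univ.erase k, sg (s i) * (if i ∈ S then b j i else a j i) := by
        intro j
        refine Finset.sum_congr rfl fun i hi => ?_
        simp [Finset.ne_of_mem_erase hi]
      simp only [e1, e2, e3, flip_same, sg_not]
      simp only [if_neg hk, Finset.mem_insert_self, if_true]
      have := scalar_step hc hm
        (fun j => ∑ i ∈ Finset.univ.erase k, sg (s i) * (if i ∈ S then b j i else a j i))
        (fun j => sg (s k) * a j k) (fun j => sg (s k) * b j k)
        (fun j l => by
          rw [← mul_sub, ← mul_sub, abs_mul, abs_mul, abs_sg, one_mul, one_mul]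
          exact hl k j l)
        (fun j => by
          rw [abs_mul, abs_mul, abs_sg, one_mul, one_mul]
          exact h0 k j)
      simpa only [neg_mul, sub_eq_add_neg] using this
  simpa using key Finset.univ

/-! ### Exponential square moments -/

/-- A Rademacher sum in an inner product space has a Gaussian-type exponential square moment. The
induction on `S` integrates out one sign, using `cosh y ≤ exp (y² / 2)`, which increases the
parameter `μ`. -/
lemma exp_sq_aux {κ E : Type*} [Fintype κ] [DecidableEq κ] [NormedAddCommGroup E]
    [InnerProductSpace ℝ E] (v : κ → E) (S : Finset κ) : ∀ μ : ℝ, 0 ≤ μ →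
    2 * μ * ∑ i ∈ S, ‖v i‖ ^ 2 < 1 →
    𝔼 s : κ → Bool, Real.exp (μ * ‖∑ i ∈ S, sg (s i) • v i‖ ^ 2)
      ≤ (Real.sqrt (1 - 2 * μ * ∑ i ∈ S, ‖v i‖ ^ 2))⁻¹ := by
  induction S using Finset.induction_on with
  | empty => intro μ _ _; simp
  | insert k S hk ih =>
    intro μ hμ h1
    rw [Finset.sum_insert hk] at h1 ⊢
    set V := ∑ i ∈ S, ‖v i‖ ^ 2 with hV
    have hV0 : 0 ≤ V := Finset.sum_nonneg fun i _ => sq_nonneg _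
    set a := ‖v k‖ ^ 2 with ha
    have ha0 : 0 ≤ a := sq_nonneg _
    set ν := μ + 2 * μ ^ 2 * a with hν
    have hν0 : 0 ≤ ν := by positivity
    have hy0 : 0 ≤ 2 * μ * a := by positivity
    have hs0 : 0 ≤ 2 * μ * V := by positivity
    have hν1 : 2 * ν * V < 1 := by
      have : 2 * ν * V = 2 * μ * V * (1 + 2 * μ * a) := by rw [hν]; ring
      rw [this]
      nlinarith
    have step : 𝔼 s : κ → Bool, Real.exp (μ * ‖∑ i ∈ insert k S, sg (s i) • v i‖ ^ 2)
        ≤ 𝔼 s : κ → Bool, Real.exp (μ * a) * Real.exp (ν * ‖∑ i ∈ S, sg (s i) • v i‖ ^ 2) := by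
      apply expect_le_of_pair (flip k)
      intro s
      rw [Finset.sum_insert hk, Finset.sum_insert hk, sum_flip k s S hk, flip_same, sg_not]
      generalize ∑ i ∈ S, sg (s i) • v i = R
      have hsq : sg (s k) ^ 2 = 1 := by rw [← sq_abs, abs_sg, one_pow]
      have n1 : ‖sg (s k) • v k + R‖ ^ 2 = a + 2 * (sg (s k) * inner ℝ (v k) R) + ‖R‖ ^ 2 := by
        rw [norm_add_sq_real, norm_smul, mul_pow, Real.norm_eq_abs, sq_abs, hsq,
          real_inner_smul_left, one_mul]
      have n2 : ‖-sg (s k) • v k + R‖ ^ 2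
          = a - 2 * (sg (s k) * inner ℝ (v k) R) + ‖R‖ ^ 2 := by
        rw [norm_add_sq_real, norm_smul, mul_pow, Real.norm_eq_abs, sq_abs, neg_sq, hsq,
          real_inner_smul_left, one_mul]
        ring
      have hcs : (sg (s k) * inner ℝ (v k) R) ^ 2 ≤ a * ‖R‖ ^ 2 := by
        rw [mul_pow, hsq, one_mul, ha, ← mul_pow, sq_le_sq]
        exact (abs_real_inner_le_norm _ _).trans (le_abs_self _)
      generalize sg (s k) * inner ℝ (v k) R = z at *
      rw [n1, n2]
      have hch := Real.cosh_le_exp_half_sq (2 * μ * z)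
      rw [Real.cosh_eq] at hch
      have hexp : Real.exp ((2 * μ * z) ^ 2 / 2) ≤ Real.exp (2 * μ ^ 2 * a * ‖R‖ ^ 2) := by
        apply Real.exp_le_exp.2
        nlinarith [mul_le_mul_of_nonneg_left hcs (sq_nonneg μ)]
      have p1 : Real.exp (μ * (a + 2 * z + ‖R‖ ^ 2))
          = Real.exp (μ * a) * Real.exp (μ * ‖R‖ ^ 2) * Real.exp (2 * μ * z) := by
        rw [← Real.exp_add, ← Real.exp_add]; ring_nf
      have p2 : Real.exp (μ * (a - 2 * z + ‖R‖ ^ 2))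
          = Real.exp (μ * a) * Real.exp (μ * ‖R‖ ^ 2) * Real.exp (-(2 * μ * z)) := by
        rw [← Real.exp_add, ← Real.exp_add]; ring_nf
      have p3 : Real.exp (ν * ‖R‖ ^ 2)
          = Real.exp (μ * ‖R‖ ^ 2) * Real.exp (2 * μ ^ 2 * a * ‖R‖ ^ 2) := by
        rw [← Real.exp_add, hν]; ring_nf
      rw [p1, p2, p3]
      have hpos : 0 < Real.exp (μ * a) * Real.exp (μ * ‖R‖ ^ 2) := by positivity
      have := mul_le_mul_of_nonneg_left (hch.trans hexp) hpos.le
      nlinarith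
    refine step.trans ?_
    rw [← Finset.mul_expect]
    refine (mul_le_mul_of_nonneg_left (ih ν hν0 hν1) (Real.exp_pos _).le).trans ?_
    have hden : 0 < 1 - 2 * μ * (a + V) := by linarith
    have hden' : 0 < 1 - 2 * ν * V := by linarith
    rw [← div_eq_mul_inv, ← one_div, div_le_div_iff₀ (Real.sqrt_pos.2 hden') (Real.sqrt_pos.2 hden),
      one_mul]
    apply Real.le_sqrt_of_sq_le
    rw [mul_pow, Real.sq_sqrt hden.le, ← Real.exp_nat_mul]
    have hy1 : Real.exp (2 * μ * a) * (1 - 2 * μ * a) ≤ 1 := by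
      have h1 := Real.add_one_le_exp (-(2 * μ * a))
      have h2 := mul_le_mul_of_nonneg_left h1 (Real.exp_pos (2 * μ * a)).le
      rw [← Real.exp_add] at h2
      simp only [add_neg_cancel, Real.exp_zero] at h2
      linarith
    have hy2 := Real.add_one_le_exp (2 * μ * a)
    rw [show ((2 : ℕ) : ℝ) * (μ * a) = 2 * μ * a by push_cast; ring]
    have : 2 * ν * V = 2 * μ * V * (1 + 2 * μ * a) := by rw [hν]; ring
    rw [this]
    nlinarith [mul_le_mul_of_nonneg_left hy2 hs0]

lemma exp_sq_le_two {κ E : Type*} [Fintype κ] [DecidableEq κ] [NormedAddCommGroup E]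
    [InnerProductSpace ℝ E] (v : κ → E) {μ : ℝ} (hμ : 0 ≤ μ) (h : 4 * μ * ∑ i, ‖v i‖ ^ 2 ≤ 1) :
    𝔼 s : κ → Bool, Real.exp (μ * ‖∑ i, sg (s i) • v i‖ ^ 2) ≤ 2 := by
  refine (exp_sq_aux v Finset.univ μ hμ (by linarith)).trans ?_
  rw [inv_le_comm₀ (Real.sqrt_pos.2 (by linarith)) two_pos]
  apply Real.le_sqrt_of_sq_le
  linarith

/-! ### Peeling off network layers -/

/-- A positive-homogeneous `1`-Lipschitz activation is a combination of `t` and `|t|`. -/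
lemma activation_decomp {φ : ℝ → ℝ} (hL : LipschitzWith 1 φ) (hP : PosHomogeneous φ) :
    ∃ α β : ℝ, |α| + |β| ≤ 1 ∧ ∀ t, φ t = α * t + β * |t| := by
  have h0 : φ 0 = 0 := by simpa using hP 0 le_rfl 0
  have hb : ∀ t, |φ t| ≤ |t| := by
    intro t
    have := hL.dist_le_mul t 0
    simpa [h0, Real.dist_eq] using this
  have h1 := hb 1
  have h2 := hb (-1)
  rw [abs_neg, abs_one] at h2
  rw [abs_one] at h1
  rw [abs_le] at h1 h2
  refine ⟨(φ 1 - φ (-1)) / 2, (φ 1 + φ (-1)) / 2, ?_, fun t => ?_⟩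
  · rcases abs_cases ((φ 1 - φ (-1)) / 2) with h | h <;>
      rcases abs_cases ((φ 1 + φ (-1)) / 2) with h' | h' <;> linarith
  · rcases le_total 0 t with ht | ht
    · have := hP t ht 1
      rw [mul_one] at this
      rw [abs_of_nonneg ht, this]; ring
    · have := hP (-t) (by linarith) (-1)
      rw [show -t * -1 = t by ring] at this
      rw [abs_of_nonpos ht, this]; ring

/-- The even function `exp (ρ z²)` on the nonnegative half-line, extended by the constant `1` to
a convex nondecreasing function on the whole line. -/
noncomputable def expSq (ρ z : ℝ) : ℝ := Real.exp (ρ * max z 0 ^ 2)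

lemma expSq_mono {ρ : ℝ} (hρ : 0 ≤ ρ) : Monotone (expSq ρ) := by
  intro x y h
  unfold expSq
  gcongr

lemma expSq_convex {ρ : ℝ} (hρ : 0 ≤ ρ) : ConvexOn ℝ Set.univ (expSq ρ) := by
  have h1 : ConvexOn ℝ Set.univ fun z : ℝ => max z 0 :=
    (convexOn_id convex_univ).sup (convexOn_const 0 convex_univ)
  have h2 : ConvexOn ℝ Set.univ fun z : ℝ => ρ * max z 0 ^ 2 :=
    (h1.pow (fun x _ => le_max_right x 0) 2).smul hρ
  refine ⟨convex_univ, fun x hx y hy s t hs ht hst => ?_⟩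
  exact (Real.exp_le_exp.2 (h2.2 hx hy hs ht hst)).trans
    (convexOn_exp.2 (Set.mem_univ _) (Set.mem_univ _) hs ht hst)

lemma one_le_expSq {ρ : ℝ} (hρ : 0 ≤ ρ) (z : ℝ) : 1 ≤ expSq ρ z :=
  Real.one_le_exp (by positivity)

lemma exp_le_expSq {ρ y u : ℝ} (hρ : 0 ≤ ρ) (h : |y| ≤ u) :
    Real.exp (ρ * y ^ 2) ≤ expSq ρ u := by
  unfold expSq
  rw [max_eq_left ((abs_nonneg y).trans h), ← sq_abs y]
  gcongr

lemma frob_sq {m n : ℕ} (W : Matrix (Fin m) (Fin n) ℝ) :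
    frobeniusNorm W ^ 2 = ∑ i, ∑ j, W i j ^ 2 :=
  Real.sq_sqrt (Finset.sum_nonneg fun _ _ => Finset.sum_nonneg fun _ _ => sq_nonneg _)

/-- Peeling off one layer: the supremum over a layer with Frobenius norm at most `R` costs a
factor `4` in the exponential square moment, one for each of the activations `±t`, `±|t|`. -/
lemma peel {J κ : Type*} [Finite J] [Nonempty J] [Fintype κ] [DecidableEq κ]
    (n n' : J → ℕ) (W : ∀ j, Matrix (Fin (n' j)) (Fin (n j)) ℝ) (φ : J → ℝ → ℝ)
    (f : ∀ j, κ → Fin (n j) → ℝ) (a : κ → ℝ) {R lam : ℝ} (hlam : 0 ≤ lam)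
    (hW : ∀ j, frobeniusNorm (W j) ≤ R) (hL : ∀ j, LipschitzWith 1 (φ j))
    (hP : ∀ j, PosHomogeneous (φ j)) :
    𝔼 s : κ → Bool, (⨆ j, Real.exp (lam * ∑ r, (∑ i, sg (s i) *
        (a i * φ j (∑ l, W j r l * f j i l))) ^ 2)) ≤
      4 * 𝔼 s : κ → Bool, ⨆ j, Real.exp (lam * R ^ 2 * ∑ l, (∑ i, sg (s i) *
        (a i * f j i l)) ^ 2) := by
  set ρ := lam * R ^ 2 with hρ
  have hρ0 : 0 ≤ ρ := by positivity
  -- Neurons with normalized weights; `none` is a dummy neuron that covers empty layers.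
  let Q := Σ j, Option (Fin (n' j))
  have : Finite Q := inferInstance
  have : Nonempty Q := ⟨⟨Classical.arbitrary J, none⟩⟩
  let nr : ∀ j, Fin (n' j) → ℝ := fun j r => Real.sqrt (∑ l, W j r l ^ 2)
  have hnr : ∀ j r, nr j r ^ 2 = ∑ l, W j r l ^ 2 := fun j r =>
    Real.sq_sqrt (Finset.sum_nonneg fun _ _ => sq_nonneg _)
  have hnr0 : ∀ j r, 0 ≤ nr j r := fun j r => Real.sqrt_nonneg _
  let w : ∀ q : Q, Fin (n q.1) → ℝ := fun q =>
    match q with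
    | ⟨_, none⟩ => 0
    | ⟨j, some r⟩ => fun l => W j r l / nr j r
  have hw : ∀ q, ∑ l, w q l ^ 2 ≤ 1 := by
    rintro ⟨j, _ | r⟩
    · simp [w]
    · simp only [w, div_pow]
      rw [← Finset.sum_div, hnr]
      exact div_self_le_one _
  have hwW : ∀ j r l, W j r l = nr j r * w ⟨j, some r⟩ l := by
    intro j r l
    simp only [w]
    by_cases h : nr j r = 0
    · have h2 : ∑ l, W j r l ^ 2 = 0 := by rw [← hnr, h]; norm_num
      have := (Finset.sum_eq_zero_iff_of_nonneg (fun _ _ => sq_nonneg _)).1 h2 l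
        (Finset.mem_univ l)
      rw [h, zero_mul]
      exact pow_eq_zero_iff (two_ne_zero) |>.1 this
    · rw [mul_div_cancel₀ _ h]
  let t : Q → κ → ℝ := fun q i => ∑ l, w q l * f q.1 i l
  let T : (Q → κ → ℝ) → (κ → Bool) → ℝ := fun b s => ⨆ q, expSq ρ (∑ i, sg (s i) * b q i)
  let b1 : Q → κ → ℝ := fun q i => a i * t q i
  let b2 : Q → κ → ℝ := fun q i => -(a i * t q i)
  let b3 : Q → κ → ℝ := fun q i => a i * |t q i|
  let b4 : Q → κ → ℝ := fun q i => -(a i * |t q i|)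
  have hT : ∀ b : Q → κ → ℝ, (∀ i p q, |b p i - b q i| ≤ |b1 p i - b1 q i|) →
      (∀ i q, |b q i| ≤ |b1 q i|) → 𝔼 s, T b s ≤ 𝔼 s, T b1 s := fun b h1 h2 =>
    contraction (expSq_convex hρ0) (expSq_mono hρ0) b b1 h1 h2
  have hT2 : 𝔼 s, T b2 s ≤ 𝔼 s, T b1 s := by
    refine hT b2 (fun i p q => ?_) (fun i q => ?_)
    · simp only [b1, b2]; rw [neg_sub_neg, abs_sub_comm]
    · simp only [b1, b2]; rw [abs_neg]
  have hT3 : 𝔼 s, T b3 s ≤ 𝔼 s, T b1 s := by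
    refine hT b3 (fun i p q => ?_) (fun i q => ?_)
    · simp only [b1, b3]; rw [← mul_sub, ← mul_sub, abs_mul, abs_mul]
      exact mul_le_mul_of_nonneg_left (abs_abs_sub_abs_le_abs_sub _ _) (abs_nonneg _)
    · simp only [b1, b3]; rw [abs_mul, abs_mul, abs_abs]
  have hT4 : 𝔼 s, T b4 s ≤ 𝔼 s, T b1 s := by
    refine hT b4 (fun i p q => ?_) (fun i q => ?_)
    · simp only [b1, b4]; rw [neg_sub_neg, abs_sub_comm, ← mul_sub, ← mul_sub, abs_mul, abs_mul]
      exact mul_le_mul_of_nonneg_left (abs_abs_sub_abs_le_abs_sub _ _) (abs_nonneg _)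
    · simp only [b1, b4]; rw [abs_neg, abs_mul, abs_mul, abs_abs]
  have hT1 : 𝔼 s, T b1 s ≤ 𝔼 s : κ → Bool, ⨆ j, Real.exp (ρ * ∑ l, (∑ i, sg (s i) *
        (a i * f j i l)) ^ 2) := by
    refine expect_mono fun s => ciSup_le fun q => ?_
    refine le_trans ?_ (le_sup (fun j => Real.exp (ρ * ∑ l, (∑ i, sg (s i) *
        (a i * f j i l)) ^ 2)) q.1)
    have e : ∑ i, sg (s i) * b1 q i = ∑ l, w q l * ∑ i, sg (s i) * (a i * f q.1 i l) := by
      simp only [b1, t, Finset.mul_sum]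
      rw [Finset.sum_comm]
      refine Finset.sum_congr rfl fun l _ => Finset.sum_congr rfl fun i _ => ?_
      ring
    have hcs := Finset.sum_mul_sq_le_sq_mul_sq Finset.univ (w q)
      (fun l => ∑ i, sg (s i) * (a i * f q.1 i l))
    rw [← e] at hcs
    have h2 : (∑ i, sg (s i) * b1 q i) ^ 2 ≤ ∑ l, (∑ i, sg (s i) * (a i * f q.1 i l)) ^ 2 :=
      hcs.trans (mul_le_of_le_one_left (Finset.sum_nonneg fun _ _ => sq_nonneg _) (hw q))
    unfold expSq
    refine Real.exp_le_exp.2 (mul_le_mul_of_nonneg_left (le_trans ?_ h2) hρ0)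
    rw [sq_le_sq]
    rcases le_total 0 (∑ i, sg (s i) * b1 q i) with h | h
    · rw [max_eq_left h]
    · rw [max_eq_right h, abs_zero]; exact abs_nonneg _
  have main : ∀ s : κ → Bool, (⨆ j, Real.exp (lam * ∑ r, (∑ i, sg (s i) *
        (a i * φ j (∑ l, W j r l * f j i l))) ^ 2)) ≤ T b1 s + T b2 s + T b3 s + T b4 s := by
    intro s
    have hone : ∀ b, 1 ≤ T b s := fun b =>
      (one_le_expSq hρ0 _).trans (le_sup (fun q => expSq ρ (∑ i, sg (s i) * b q i))
        (Classical.arbitrary Q))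
    have hle : ∀ b q, expSq ρ (∑ i, sg (s i) * b q i) ≤ T b s := fun b q =>
      le_sup (fun q => expSq ρ (∑ i, sg (s i) * b q i)) q
    refine ciSup_le fun j => ?_
    rcases isEmpty_or_nonempty (Fin (n' j)) with hE | hE
    · simp only [Finset.univ_eq_empty, Finset.sum_empty, mul_zero, Real.exp_zero]
      linarith [hone b1, hone b2, hone b3, hone b4]
    obtain ⟨α, β, hαβ, hφ⟩ := activation_decomp (hL j) (hP j)
    let y : Fin (n' j) → ℝ := fun r => ∑ i, sg (s i) * (a i * φ j (t ⟨j, some r⟩ i))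
    obtain ⟨r, hr⟩ := exists_sup fun r => y r ^ 2
    have hy : ∀ r, (∑ i, sg (s i) * (a i * φ j (∑ l, W j r l * f j i l))) ^ 2
        = nr j r ^ 2 * y r ^ 2 := by
      intro r
      rw [← mul_pow]
      congr 1
      simp only [y, Finset.mul_sum]
      refine Finset.sum_congr rfl fun i _ => ?_
      have : ∑ l, W j r l * f j i l = nr j r * t ⟨j, some r⟩ i := by
        simp only [t, Finset.mul_sum]
        refine Finset.sum_congr rfl fun l _ => ?_
        rw [hwW j r l]; ring
      rw [this, hP j _ (hnr0 j r)]
      ring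
    have hsum : ∑ r, (∑ i, sg (s i) * (a i * φ j (∑ l, W j r l * f j i l))) ^ 2
        ≤ R ^ 2 * y r ^ 2 := by
      have h1 : ∑ r, nr j r ^ 2 ≤ R ^ 2 := by
        have h2 : frobeniusNorm (W j) ^ 2 = ∑ r, nr j r ^ 2 :=
          (frob_sq (W j)).trans (Finset.sum_congr rfl fun r _ => (hnr j r).symm)
        rw [← h2]
        exact pow_le_pow_left₀ (Real.sqrt_nonneg _) (hW j) 2
      calc _ = ∑ r', nr j r' ^ 2 * y r' ^ 2 := Finset.sum_congr rfl fun r _ => hy r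
        _ ≤ ∑ r', nr j r' ^ 2 * y r ^ 2 := by
            refine Finset.sum_le_sum fun r' _ => mul_le_mul_of_nonneg_left ?_ (sq_nonneg _)
            rw [hr]; exact le_sup (fun r => y r ^ 2) r'
        _ = (∑ r', nr j r' ^ 2) * y r ^ 2 := by rw [Finset.sum_mul]
        _ ≤ _ := mul_le_mul_of_nonneg_right h1 (sq_nonneg _)
    have hexp : Real.exp (lam * ∑ r, (∑ i, sg (s i) * (a i * φ j (∑ l, W j r l * f j i l))) ^ 2)
        ≤ Real.exp (ρ * y r ^ 2) := by
      apply Real.exp_le_exp.2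
      rw [hρ, mul_assoc]
      exact mul_le_mul_of_nonneg_left hsum hlam
    refine hexp.trans ?_
    set q : Q := ⟨j, some r⟩ with hq
    set X := ∑ i, sg (s i) * b1 q i with hX
    set Y := ∑ i, sg (s i) * b3 q i with hY
    have e2 : ∑ i, sg (s i) * b2 q i = -X := by
      simp only [hX, b1, b2, mul_neg, Finset.sum_neg_distrib]
    have e4 : ∑ i, sg (s i) * b4 q i = -Y := by
      simp only [hY, b3, b4, mul_neg, Finset.sum_neg_distrib]
    have hyr : y r = α * X + β * Y := by
      simp only [y, hX, hY, b1, b3, Finset.mul_sum]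
      rw [← Finset.sum_add_distrib]
      refine Finset.sum_congr rfl fun i _ => ?_
      rw [hφ, ← hq]; ring
    have hyb : |y r| ≤ max |X| |Y| := by
      rw [hyr]
      calc |α * X + β * Y| ≤ |α| * |X| + |β| * |Y| := by
            rw [← abs_mul, ← abs_mul]; exact abs_add_le _ _
        _ ≤ |α| * max |X| |Y| + |β| * max |X| |Y| := by
            gcongr
            · exact le_max_left _ _
            · exact le_max_right _ _
        _ = (|α| + |β|) * max |X| |Y| := by ring
        _ ≤ _ := mul_le_of_le_one_left (le_max_of_le_left (abs_nonneg _)) hαβ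
    have k1 := hle b1 q
    have k2 := hle b2 q
    have k3 := hle b3 q
    have k4 := hle b4 q
    rw [e2] at k2
    rw [e4] at k4
    have := hone b1; have := hone b2; have := hone b3; have := hone b4
    rcases le_max_iff.1 hyb with h | h
    · rcases abs_choice X with h' | h' <;> rw [h'] at h
      · linarith [exp_le_expSq hρ0 h]
      · linarith [exp_le_expSq hρ0 h]
    · rcases abs_choice Y with h' | h' <;> rw [h'] at h
      · linarith [exp_le_expSq hρ0 h]
      · linarith [exp_le_expSq hρ0 h]
  refine (expect_mono main).trans ?_
  rw [Finset.expect_add_distrib, Finset.expect_add_distrib, Finset.expect_add_distrib]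
  linarith

/-- The data of a network on `ℝ^{d₀}`: layer widths, weights, activations. -/
structure Net (d₀ : ℕ) where
  dims : ℕ → ℕ
  h0 : dims 0 = d₀
  W : ∀ i : ℕ, Matrix (Fin (dims (i + 1))) (Fin (dims i)) ℝ
  σ : ℕ → ℝ → ℝ

/-- The output of the `k`-th layer of a network. -/
noncomputable def Net.hid {d₀ : ℕ} (N : Net d₀) (k : ℕ) (x : Fin d₀ → ℝ) : Fin (N.dims k) → ℝ :=
  nnForward N.dims N.W N.σ k (fun l => x (Fin.cast N.h0 l))

/-- Exponential square moment of the supremum of a hidden-layer Rademacher sum: a factor `4` for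
each layer, on top of the moment of the Rademacher sum of the inputs. -/
lemma hid_exp {J κ : Type*} [Finite J] [Nonempty J] [Fintype κ] [DecidableEq κ] {d₀ : ℕ}
    (N : J → Net d₀) (R : ℕ → ℝ) (a : κ → ℝ) (x : κ → Fin d₀ → ℝ) {V : ℝ}
    (hV : ∑ i, a i ^ 2 * ∑ l, x i l ^ 2 ≤ V) (k : ℕ)
    (hW : ∀ j, ∀ i < k, frobeniusNorm ((N j).W i) ≤ R i)
    (hL : ∀ j, ∀ i < k, LipschitzWith 1 ((N j).σ i))
    (hP : ∀ j, ∀ i < k, PosHomogeneous ((N j).σ i)) : ∀ lam : ℝ, 0 ≤ lam →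
    4 * (lam * (∏ i ∈ Finset.range k, R i) ^ 2) * V ≤ 1 →
    𝔼 s : κ → Bool, (⨆ j, Real.exp (lam * ∑ l, (∑ i, sg (s i) *
        (a i * (N j).hid k (x i) l)) ^ 2)) ≤ 4 ^ k * 2 := by
  induction k with
  | zero =>
    intro lam hlam h
    let v : κ → EuclideanSpace ℝ (Fin d₀) := fun i => WithLp.toLp 2 (fun l => a i * x i l)
    have hv : ∀ i, ‖v i‖ ^ 2 = a i ^ 2 * ∑ l, x i l ^ 2 := by
      intro i
      rw [EuclideanSpace.real_norm_sq_eq, Finset.mul_sum]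
      exact Finset.sum_congr rfl fun l _ => mul_pow _ _ _
    have hsum : ∀ (s : κ → Bool) (j : J), ∑ l, (∑ i, sg (s i) * (a i * (N j).hid 0 (x i) l)) ^ 2
        = ‖∑ i, sg (s i) • v i‖ ^ 2 := by
      intro s j
      rw [EuclideanSpace.real_norm_sq_eq]
      refine Fintype.sum_equiv (finCongr (N j).h0) _ _ fun l => ?_
      simp [v, Net.hid, nnForward]
    simp only [hsum, ciSup_const]
    rw [pow_zero, one_mul]
    apply exp_sq_le_two v hlam
    simp only [Finset.range_zero, Finset.prod_empty, one_pow, mul_one] at h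
    simp only [hv]
    exact (mul_le_mul_of_nonneg_left hV (by positivity)).trans h
  | succ k ih =>
    intro lam hlam h
    have h1 := peel (fun j => (N j).dims k) (fun j => (N j).dims (k + 1)) (fun j => (N j).W k)
      (fun j => (N j).σ k) (fun j i => (N j).hid k (x i)) a hlam (fun j => hW j k (by simp))
      (fun j => hL j k (by simp)) (fun j => hP j k (by simp))
    have h2 := ih (fun j i hi => hW j i (by omega)) (fun j i hi => hL j i (by omega))
      (fun j i hi => hP j i (by omega)) (lam * R k ^ 2) (by positivity) (by
        rw [Finset.prod_range_succ, mul_pow] at h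
        calc _ = _ := by ring
          _ ≤ 1 := h)
    calc _ ≤ _ := h1
      _ ≤ 4 * (4 ^ k * 2) := by linarith
      _ = _ := by ring

/-- Second moment of the supremum of a hidden-layer Rademacher sum. The depth enters linearly,
through the logarithm of the exponential moment. -/
lemma hid_second_moment {J κ : Type*} [Finite J] [Nonempty J] [Fintype κ] [DecidableEq κ]
    {d₀ : ℕ} (N : J → Net d₀) (R : ℕ → ℝ) (hR : ∀ i, 0 < R i) (a : κ → ℝ)
    (x : κ → Fin d₀ → ℝ) {V : ℝ}
    (hV : ∑ i, a i ^ 2 * ∑ l, x i l ^ 2 ≤ V) (k : ℕ)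
    (hW : ∀ j, ∀ i < k, frobeniusNorm ((N j).W i) ≤ R i)
    (hL : ∀ j, ∀ i < k, LipschitzWith 1 ((N j).σ i))
    (hP : ∀ j, ∀ i < k, PosHomogeneous ((N j).σ i)) :
    𝔼 s : κ → Bool, (⨆ j, ∑ l, (∑ i, sg (s i) * (a i * (N j).hid k (x i) l)) ^ 2) ≤
      8 * (k + 1) * Real.log 2 * (∏ i ∈ Finset.range k, R i) ^ 2 * V := by
  set P := ∏ i ∈ Finset.range k, R i with hPdef
  have hP0 : 0 < P := Finset.prod_pos fun i _ => hR i
  have hlog : 0 < Real.log 2 := Real.log_pos one_lt_two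
  set Z : (κ → Bool) → ℝ := fun s => ⨆ j, ∑ l, (∑ i, sg (s i) * (a i * (N j).hid k (x i) l)) ^ 2
    with hZ
  have hc : 0 < 8 * ((k : ℝ) + 1) * Real.log 2 * P ^ 2 := by positivity
  have key : ∀ V' : ℝ, V < V' → 𝔼 s, Z s ≤ 8 * (k + 1) * Real.log 2 * P ^ 2 * V' := by
    intro V' hV'
    have hV0 : 0 < V' := lt_of_le_of_lt (le_trans (Finset.sum_nonneg fun i _ => mul_nonneg
      (sq_nonneg _) (Finset.sum_nonneg fun _ _ => sq_nonneg _)) hV) hV'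
    set lam := 1 / (4 * P ^ 2 * V') with hlam
    have hlam0 : 0 < lam := by positivity
    have h1 := hid_exp N R a x (hV.trans hV'.le) k hW hL hP lam hlam0.le (by
      rw [← hPdef, hlam]; apply le_of_eq; field_simp)
    have h2 : 𝔼 s, Real.exp (lam * Z s) ≤ 4 ^ k * 2 := by
      refine le_trans (expect_mono fun s => ?_) h1
      obtain ⟨j, hj⟩ := exists_sup fun j =>
        ∑ l, (∑ i, sg (s i) * (a i * (N j).hid k (x i) l)) ^ 2
      rw [hZ]
      simp only
      rw [← hj]
      exact le_sup (fun j => Real.exp (lam * ∑ l, (∑ i, sg (s i) *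
        (a i * (N j).hid k (x i) l)) ^ 2)) j
    set τ := Real.log (4 ^ k * 2) with hτ
    have hτ2 : τ = (2 * k + 1) * Real.log 2 := by
      rw [hτ, Real.log_mul (by positivity) (by norm_num), Real.log_pow,
        show (4 : ℝ) = 2 ^ 2 by norm_num, Real.log_pow]
      push_cast; ring
    have hexpτ : Real.exp (-τ) * (4 ^ k * 2) = 1 := by
      rw [Real.exp_neg, hτ, Real.exp_log (by positivity)]
      exact inv_mul_cancel₀ (by positivity)
    -- Linearize at `τ`: `1 + (y - τ) ≤ exp (y - τ)`.
    have h3 : 𝔼 s, lam * Z s ≤ 𝔼 s, (Real.exp (-τ) * Real.exp (lam * Z s) + (τ - 1)) := by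
      refine expect_mono fun s => ?_
      have := Real.add_one_le_exp (-τ + lam * Z s)
      rw [Real.exp_add] at this
      linarith
    rw [Finset.expect_add_distrib, ← Finset.mul_expect, ← Finset.mul_expect,
      Fintype.expect_const] at h3
    have h4 := mul_le_mul_of_nonneg_left h2 (Real.exp_pos (-τ)).le
    have h5 : lam * 𝔼 s, Z s ≤ τ := by linarith
    have h6 : 𝔼 s, Z s ≤ τ * (4 * P ^ 2 * V') := by
      rw [hlam, one_div, inv_mul_le_iff₀ (by positivity)] at h5
      linarith
    refine h6.trans ?_
    rw [hτ2]
    have : 0 ≤ Real.log 2 * P ^ 2 * V' := by positivity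
    nlinarith
  rw [← div_le_iff₀' hc]
  refine le_of_forall_gt_imp_ge_of_dense fun V' hV' => ?_
  rw [div_le_iff₀' hc]
  exact key V' hV'

/-! ### Empirical Rademacher complexity of the loss class -/

/-- Members of `TClass` with the linear output layer `U` separated from the hidden layers. -/
lemma exists_net {C d₀ k : ℕ} {Mw : Fin (k + 1) → ℝ}
    {T : (Fin d₀ → ℝ) → Fin C → Fin C → ℝ} (hT : T ∈ TClass C d₀ (k + 1) Mw) :
    ∃ N : Net d₀, ∃ U : Fin C × Fin C → Fin (N.dims k) → ℝ,
      ∑ p, ∑ l, U p l ^ 2 ≤ Mw (Fin.last k) ^ 2 ∧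
      (∀ i (h : i < k), frobeniusNorm (N.W i) ≤ Mw ⟨i, h.trans k.lt_succ_self⟩) ∧
      (∀ i < k, LipschitzWith 1 (N.σ i)) ∧ (∀ i < k, PosHomogeneous (N.σ i)) ∧
      ∀ x p q, T x p q = Real.exp (∑ l, U (p, q) l * N.hid k x l) /
        ∑ c, Real.exp (∑ l, U (p, c) l * N.hid k x l) := by
  obtain ⟨dims, h0, hd, W, σ, hW, hσ, hid, hT⟩ := hT
  refine ⟨⟨dims, h0, W, σ⟩, fun p l => W k (Fin.cast hd.symm (finProdFinEquiv p)) l, ?_,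
    fun i h => hW ⟨i, _⟩, fun i h => (hσ i (by omega)).1, fun i h => (hσ i (by omega)).2, ?_⟩
  · have h1 := hW (Fin.last k)
    have h2 : ∑ p : Fin C × Fin C, ∑ l, W k (Fin.cast hd.symm (finProdFinEquiv p)) l ^ 2 =
        ∑ r, ∑ l, W k r l ^ 2 :=
      Fintype.sum_equiv (finProdFinEquiv.trans (finCongr hd.symm)) _ _ fun p => rfl
    rw [h2]
    refine (frob_sq (W k)).symm.le.trans ?_
    exact pow_le_pow_left₀ (Real.sqrt_nonneg _) h1 2
  · intro x p q
    rw [hT x p q]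
    have hid' : σ k = id := hid
    simp only [nnForward, hid', id, Net.hid]

/-- One half of the fact that log-sum-exp is `1`-Lipschitz for the sup norm. -/
lemma log_sum_exp_sub_le {ι : Type*} [Fintype ι] [Nonempty ι] (u v : ι → ℝ) {K : ℝ}
    (h : ∀ c, u c - v c ≤ K) :
    Real.log (∑ c, Real.exp (u c)) - Real.log (∑ c, Real.exp (v c)) ≤ K := by
  have hv : 0 < ∑ c, Real.exp (v c) :=
    Finset.sum_pos (fun c _ => Real.exp_pos _) Finset.univ_nonempty
  have hu : 0 < ∑ c, Real.exp (u c) :=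
    Finset.sum_pos (fun c _ => Real.exp_pos _) Finset.univ_nonempty
  have : ∑ c, Real.exp (u c) ≤ Real.exp K * ∑ c, Real.exp (v c) := by
    rw [Finset.mul_sum]
    refine Finset.sum_le_sum fun c _ => ?_
    rw [← Real.exp_add]
    exact Real.exp_le_exp.2 (by linarith [h c])
  have := Real.log_le_log hu this
  rw [Real.log_mul (Real.exp_ne_zero _) hv.ne', Real.log_exp] at this
  linarith

lemma softmax_loss {ι : Type*} [Fintype ι] [Nonempty ι] (u : ι → ℝ) (q : ι) :
    -Real.log (Real.exp (u q) / ∑ c, Real.exp (u c)) =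
      Real.log (∑ c, Real.exp (u c - u q)) := by
  have hu : 0 < ∑ c, Real.exp (u c) :=
    Finset.sum_pos (fun c _ => Real.exp_pos _) Finset.univ_nonempty
  rw [← Real.log_inv, inv_div]
  simp only [Real.exp_sub, Finset.sum_div]

lemma expect_sqrt_le {ι : Type*} [Fintype ι] [Nonempty ι] (Z : ι → ℝ) (hZ : ∀ i, 0 ≤ Z i)
    {K : ℝ} (h : 𝔼 i, Z i ≤ K) : 𝔼 i, Real.sqrt (Z i) ≤ Real.sqrt K := by
  apply Real.le_sqrt_of_sq_le
  refine le_trans ?_ h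
  have h1 := sq_sum_le_card_mul_sum_sq (s := Finset.univ) (f := fun i => Real.sqrt (Z i))
  simp only [fun i => Real.sq_sqrt (hZ i)] at h1
  rw [Fintype.expect_eq_sum_div_card, Fintype.expect_eq_sum_div_card, div_pow]
  have hc : (0 : ℝ) < Fintype.card ι := by exact_mod_cast Fintype.card_pos
  rw [div_le_div_iff₀ (by positivity) hc]
  rw [Finset.card_univ] at h1
  nlinarith

/-- A linear output layer of Frobenius norm at most `r`: Cauchy–Schwarz over the outputs reduces
the Rademacher average to the second moments of the hidden layer. -/
lemma linear_layer {J κ P : Type*} [Finite J] [Nonempty J] [Fintype κ] [DecidableEq κ] [Fintype P]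
    {d₀ : ℕ} (N : J → Net d₀) (R : ℕ → ℝ) (hR : ∀ i, 0 < R i) (k : ℕ)
    (hW : ∀ j, ∀ i < k, frobeniusNorm ((N j).W i) ≤ R i)
    (hL : ∀ j, ∀ i < k, LipschitzWith 1 ((N j).σ i))
    (hP : ∀ j, ∀ i < k, PosHomogeneous ((N j).σ i))
    (U : ∀ j, P → Fin ((N j).dims k) → ℝ) {r : ℝ} (hr : 0 ≤ r)
    (hU : ∀ j, ∑ p, ∑ l, U j p l ^ 2 ≤ r ^ 2) (a : P → κ → ℝ) (x : κ → Fin d₀ → ℝ) {V : ℝ}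
    (hV : ∑ p, ∑ i, a p i ^ 2 * ∑ l, x i l ^ 2 ≤ V) :
    𝔼 s : κ → Bool, (⨆ j, ∑ p, ∑ l, U j p l * ∑ i, sg (s i) * (a p i * (N j).hid k (x i) l)) ≤
      r * Real.sqrt (8 * (k + 1) * Real.log 2 * (∏ i ∈ Finset.range k, R i) ^ 2 * V) := by
  set Z : (κ → Bool) → P → ℝ := fun s p =>
    ⨆ j, ∑ l, (∑ i, sg (s i) * (a p i * (N j).hid k (x i) l)) ^ 2 with hZ
  have hZle : ∀ s p j, ∑ l, (∑ i, sg (s i) * (a p i * (N j).hid k (x i) l)) ^ 2 ≤ Z s p :=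
    fun s p j => le_sup (fun j => ∑ l, (∑ i, sg (s i) * (a p i * (N j).hid k (x i) l)) ^ 2) j
  have hZ0 : ∀ s, 0 ≤ ∑ p, Z s p := fun s => Finset.sum_nonneg fun p _ =>
    (Finset.sum_nonneg fun _ _ => sq_nonneg _).trans (hZle s p (Classical.arbitrary J))
  have hE : 𝔼 s, ∑ p, Z s p ≤
      8 * (k + 1) * Real.log 2 * (∏ i ∈ Finset.range k, R i) ^ 2 * V := by
    rw [Finset.expect_sum_comm]
    have hlog : 0 < Real.log 2 := Real.log_pos one_lt_two
    calc _ ≤ ∑ p, 8 * (k + 1) * Real.log 2 * (∏ i ∈ Finset.range k, R i) ^ 2 *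
          ∑ i, a p i ^ 2 * ∑ l, x i l ^ 2 := Finset.sum_le_sum fun p _ =>
            hid_second_moment N R hR (a p) x le_rfl k hW hL hP
      _ ≤ _ := by
        rw [← Finset.mul_sum]
        exact mul_le_mul_of_nonneg_left hV (by positivity)
  calc _ ≤ 𝔼 s, r * Real.sqrt (∑ p, Z s p) := by
        refine expect_mono fun s => ciSup_le fun j => ?_
        refine (Real.le_sqrt_of_sq_le ?_).trans_eq
          ((Real.sqrt_mul (sq_nonneg r) (∑ p, Z s p)).trans (by rw [Real.sqrt_sq hr]))
        have hcs := Finset.sum_mul_sq_le_sq_mul_sq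
          (Finset.univ : Finset (Σ _ : P, Fin ((N j).dims k))) (fun q => U j q.1 q.2)
          (fun q => ∑ i, sg (s i) * (a q.1 i * (N j).hid k (x i) q.2))
        simp only [Fintype.sum_sigma] at hcs
        refine hcs.trans ?_
        refine mul_le_mul (hU j) (Finset.sum_le_sum fun p _ => hZle s p j)
          (Finset.sum_nonneg fun _ _ => Finset.sum_nonneg fun _ _ => sq_nonneg _) (sq_nonneg _)
    _ = r * 𝔼 s, Real.sqrt (∑ p, Z s p) := by rw [Finset.mul_expect]
    _ ≤ _ := mul_le_mul_of_nonneg_left (expect_sqrt_le _ hZ0 hE) hr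

/-- The total squared mass of the coefficients that express the logit differences
`t_{y c} - t_{y ȳ}` through the logits. The value `2 (C - 1)` per example, rather than `2 C`,
matters for two classes. -/
lemma coeff_mass {C m : ℕ} (y yb : Fin m → Fin C) :
    ∑ p : Fin C × Fin C, ∑ q : Fin m × Fin C,
      (if y q.1 = p.1 then (if q.2 = p.2 then (1 : ℝ) else 0) - (if yb q.1 = p.2 then 1 else 0)
        else 0) ^ 2 = m * (2 * (C - 1)) := by
  rw [Finset.sum_comm, Fintype.sum_prod_type]
  have h : ∀ i : Fin m, ∑ c' : Fin C, ∑ p : Fin C × Fin C,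
      (if y i = p.1 then (if c' = p.2 then (1 : ℝ) else 0) - (if yb i = p.2 then 1 else 0)
        else 0) ^ 2 = 2 * (C - 1) := by
    intro i
    have h1 : ∀ c' : Fin C, ∑ p : Fin C × Fin C,
      (if y i = p.1 then (if c' = p.2 then (1 : ℝ) else 0) - (if yb i = p.2 then 1 else 0)
        else 0) ^ 2 = 2 - if c' = yb i then 2 else 0 := by
      intro c'
      rw [Fintype.sum_prod_type]
      simp only [ite_pow, ne_eq, OfNat.ofNat_ne_zero, not_false_eq_true, zero_pow]
      rw [Finset.sum_comm]
      simp only [Finset.sum_ite_eq, Finset.mem_univ, if_true]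
      have h2 : ∀ c : Fin C, ((if c' = c then (1 : ℝ) else 0) - (if yb i = c then 1 else 0)) ^ 2
          = (if c' = c then (1 : ℝ) else 0) + (if yb i = c then 1 else 0)
            - if c' = c then (if c' = yb i then 2 else 0) else 0 := by
        intro c
        by_cases h1 : c' = c
        · subst h1
          by_cases h2 : c' = yb i
          · simp [h2]; norm_num
          · simp [h2, Ne.symm h2]
        · simp [h1]
      simp [h2, Finset.sum_sub_distrib, Finset.sum_add_distrib]
      norm_num
    simp only [h1, Finset.sum_sub_distrib, Finset.sum_ite_eq', Finset.sum_const,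
      Finset.card_univ, Fintype.card_fin, nsmul_eq_mul, Finset.mem_univ, if_true]
    ring
  simp only [h, Finset.sum_const, Finset.card_univ, Fintype.card_fin, nsmul_eq_mul]

/-- The empirical Rademacher average of finitely many losses. The constants leave the numerical
inequality `8 (C - 1) ≤ C ^ 3`. -/
lemma rad_bound {C d₀ d m : ℕ} (hC : 0 < C) (hd : 0 < d) (hm : 0 < m) {B : ℝ} (hB : 0 < B)
    {Mw : Fin d → ℝ} (hMw : ∀ i, 0 < Mw i) {J : Type*} [Finite J] [Nonempty J]
    (T : J → (Fin d₀ → ℝ) → Fin C → Fin C → ℝ) (hT : ∀ j, T j ∈ TClass C d₀ d Mw)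
    (z : Fin m → (Fin d₀ → ℝ) × Fin C × Fin C) (hz : ∀ i, euclNorm (z i).1 ≤ B) :
    𝔼 e : Fin m → Bool, (⨆ j, ∑ i, sg (e i) * transLoss (T j) (z i)) ≤
      m * ((C : ℝ) ^ 2 * B * Real.sqrt (2 * d * Real.log 2) * (∏ i, Mw i) /
        Real.sqrt (C * m)) := by
  obtain ⟨k, rfl⟩ : ∃ k, d = k + 1 := ⟨d - 1, by omega⟩
  have : Nonempty (Fin C) := ⟨⟨0, hC⟩⟩
  choose N U hU hW hL hP hTe using fun j => exists_net (hT j)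
  let R : ℕ → ℝ := fun i => if h : i < k then Mw ⟨i, h.trans k.lt_succ_self⟩ else 1
  have hR : ∀ i, 0 < R i := by
    intro i
    simp only [R]
    split_ifs
    · exact hMw _
    · exact one_pos
  have hprod : (∏ i ∈ Finset.range k, R i) * Mw (Fin.last k) = ∏ i, Mw i := by
    rw [Fin.prod_univ_castSucc, Finset.prod_range]
    congr 1
    refine Finset.prod_congr rfl fun i _ => ?_
    simp only [R, i.2, dif_pos]
    rfl
  let t : J → Fin m → Fin C → ℝ := fun j i c =>
    ∑ l, U j ((z i).2.2, c) l * (N j).hid k (z i).1 l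
  let b : J → Fin m → Fin C → ℝ := fun j i c => t j i c - t j i (z i).2.1
  have hloss : ∀ j i, transLoss (T j) (z i) = Real.log (∑ c, Real.exp (b j i c)) := by
    intro j i
    unfold transLoss
    rw [hTe]
    exact softmax_loss (t j i) (z i).2.1
  have h1 := vector_contraction m (fun _ : J => (0 : ℝ))
    (fun j i => transLoss (T j) (z i)) b (by
      intro i j j'
      have hb : ∀ c, |b j i c - b j' i c| ≤
          𝔼 s : Fin C → Bool, |∑ c, sg (s c) * (b j i c - b j' i c)| := fun c =>
        abs_le_expect (fun c => b j i c - b j' i c) c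
      rw [hloss, hloss, abs_le]
      have p1 := log_sum_exp_sub_le (b j i) (b j' i) fun c => (le_abs_self _).trans (hb c)
      have p2 := log_sum_exp_sub_le (b j' i) (b j i) fun c =>
        (neg_sub (b j i c) (b j' i c)).symm.le.trans ((neg_le_abs _).trans (hb c))
      constructor <;> linarith)
  simp only [zero_add] at h1
  refine h1.trans ?_
  let a : Fin C × Fin C → Fin m × Fin C → ℝ := fun p q =>
    if (z q.1).2.2 = p.1 then (if q.2 = p.2 then (1 : ℝ) else 0) -
      (if (z q.1).2.1 = p.2 then 1 else 0) else 0
  let x : Fin m × Fin C → Fin d₀ → ℝ := fun q => (z q.1).1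
  have hx : ∀ q, ∑ l, x q l ^ 2 ≤ B ^ 2 := by
    intro q
    have := hz q.1
    unfold euclNorm at this
    exact (Real.sqrt_le_left hB.le).1 this
  have hV : ∑ p, ∑ q, a p q ^ 2 * ∑ l, x q l ^ 2 ≤ m * (2 * (C - 1)) * B ^ 2 := by
    rw [← coeff_mass (fun i => (z i).2.2) (fun i => (z i).2.1), Finset.sum_mul]
    refine Finset.sum_le_sum fun p _ => ?_
    rw [Finset.sum_mul]
    exact Finset.sum_le_sum fun q _ => mul_le_mul_of_nonneg_left (hx q) (sq_nonneg _)
  have h2 := linear_layer N R hR k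
    (fun j i hi => (hW j i hi).trans_eq (by simp only [R, hi, dif_pos])) hL hP U
    (hMw (Fin.last k)).le hU a x hV
  have e1 : 𝔼 s : Fin m → Fin C → Bool, (⨆ j, ∑ i, ∑ c, sg (s i c) * b j i c) =
      𝔼 s : Fin m × Fin C → Bool, (⨆ j, ∑ p, ∑ l, U j p l *
        ∑ i, sg (s i) * (a p i * (N j).hid k (x i) l)) := by
    refine Fintype.expect_equiv (Equiv.curry _ _ _).symm _ _ fun s => ?_
    congr 1
    funext j
    have hb : ∀ i c, b j i c =
        ∑ p : Fin C × Fin C, a p (i, c) * ∑ l, U j p l * (N j).hid k (z i).1 l := by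
      intro i c
      rw [Fintype.sum_prod_type, Finset.sum_comm]
      simp only [a, ite_mul, zero_mul, Finset.sum_ite_eq, Finset.mem_univ, if_true, sub_mul,
        one_mul, Finset.sum_sub_distrib, b, t]
    have hl : ∑ i, ∑ c, sg (s i c) * b j i c =
        ∑ q : Fin m × Fin C, ∑ p, ∑ l, sg (s q.1 q.2) * (a p q * (U j p l *
          (N j).hid k (x q) l)) := by
      rw [Fintype.sum_prod_type]
      refine Finset.sum_congr rfl fun i _ => Finset.sum_congr rfl fun c _ => ?_
      simp only [hb, Finset.mul_sum, x]
    rw [hl, Finset.sum_comm]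
    refine Finset.sum_congr rfl fun p _ => ?_
    rw [Finset.sum_comm]
    refine Finset.sum_congr rfl fun l _ => ?_
    rw [Finset.mul_sum]
    refine Finset.sum_congr rfl fun q _ => ?_
    simp only [Equiv.curry, Equiv.coe_fn_symm_mk, Function.uncurry]
    ring
  rw [e1]
  refine h2.trans ?_
  rw [← hprod]
  have hQ : 0 < ∏ i ∈ Finset.range k, R i := Finset.prod_pos fun i _ => hR i
  generalize (∏ i ∈ Finset.range k, R i) = Q at hQ
  have hr := hMw (Fin.last k)
  generalize Mw (Fin.last k) = r at hr
  have hlog : 0 < Real.log 2 := Real.log_pos one_lt_two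
  have hm' : (0 : ℝ) < m := by exact_mod_cast hm
  have hC1 : (1 : ℝ) ≤ C := by exact_mod_cast hC
  have hC0 : (0 : ℝ) < C := by linarith
  have hCm : 0 < Real.sqrt (C * m) := Real.sqrt_pos.2 (by positivity)
  rw [mul_div_assoc', le_div_iff₀ hCm, mul_assoc, ← Real.sqrt_mul' _ (by positivity)]
  have hrhs : (m : ℝ) * (C ^ 2 * B * Real.sqrt (2 * ((k + 1 : ℕ) : ℝ) * Real.log 2) * (Q * r)) =
      r * Real.sqrt ((m * C ^ 2 * B * Q) ^ 2 * (2 * ((k + 1 : ℕ) : ℝ) * Real.log 2)) := by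
    rw [Real.sqrt_mul (sq_nonneg _) (2 * ((k + 1 : ℕ) : ℝ) * Real.log 2),
      Real.sqrt_sq (by positivity)]
    ring
  rw [hrhs]
  refine mul_le_mul_of_nonneg_left (Real.sqrt_le_sqrt ?_) hr.le
  have hcube : 8 * ((C : ℝ) - 1) ≤ C ^ 3 := by
    rcases (show C = 1 ∨ 2 ≤ C by omega) with h | h
    · simp [h]
    · have h2 : (2 : ℝ) ≤ C := by exact_mod_cast h
      nlinarith [mul_nonneg (sub_nonneg.2 h2) (by nlinarith : 0 ≤ (C : ℝ) ^ 2 + 2 * C - 4)]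
  have hpos : 0 ≤ 2 * ((k : ℝ) + 1) * Real.log 2 * Q ^ 2 * m ^ 2 * B ^ 2 * C := by positivity
  have := mul_le_mul_of_nonneg_left hcube hpos
  push_cast
  calc _ = 2 * ((k : ℝ) + 1) * Real.log 2 * Q ^ 2 * m ^ 2 * B ^ 2 * C * (8 * ((C : ℝ) - 1)) := by
        ring
    _ ≤ _ := this
    _ = _ := by ring

/-! ### Bounded differences -/

lemma integrable_of_abs_le {X : Type*} [MeasurableSpace X] {μ : Measure X} [IsFiniteMeasure μ]
    {f : X → ℝ} (hf : Measurable f) {K : ℝ} (h : ∀ x, |f x| ≤ K) : Integrable f μ :=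
  Integrable.of_bound hf.aestronglyMeasurable K (Filter.Eventually.of_forall h)

lemma integrable_exp {X : Type*} [MeasurableSpace X] {μ : Measure X} [IsFiniteMeasure μ]
    {f : X → ℝ} (hf : Measurable f) {K : ℝ} (h : ∀ x, |f x| ≤ K) (t : ℝ) :
    Integrable (fun x => Real.exp (t * f x)) μ := by
  refine integrable_of_abs_le (K := Real.exp (|t| * K)) (hf.const_mul t).exp fun x => ?_
  rw [Real.abs_exp]
  refine Real.exp_le_exp.2 ((le_abs_self _).trans ?_)
  rw [abs_mul]
  exact mul_le_mul_of_nonneg_left (h x) (abs_nonneg t)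

/-- Hoeffding's lemma for a function whose oscillation is at most `c`. -/
lemma hoeffding_osc {X : Type*} [MeasurableSpace X] (μ : Measure X) [IsProbabilityMeasure μ]
    {g : X → ℝ} (hg : Measurable g) {c : ℝ} (hc : ∀ x y, g x - g y ≤ c) (t : ℝ) :
    ∫ x, Real.exp (t * g x) ∂μ ≤ Real.exp (t * ∫ x, g x ∂μ + c ^ 2 * t ^ 2 / 8) := by
  have hne : Nonempty X := μ.nonempty_of_neZero
  have hbd : BddBelow (Set.range g) :=
    ⟨g hne.some - c, by rintro _ ⟨y, rfl⟩; linarith [hc hne.some y]⟩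
  have hmem : ∀ x, g x ∈ Set.Icc (⨅ y, g y) ((⨅ y, g y) + c) := by
    intro x
    refine ⟨ciInf_le hbd x, ?_⟩
    have : g x - c ≤ ⨅ y, g y := le_ciInf fun y => by linarith [hc x y]
    linarith
  have h := (ProbabilityTheory.hasSubgaussianMGF_of_mem_Icc (μ := μ) hg.aemeasurable
    (Filter.Eventually.of_forall hmem)).mgf_le t
  unfold ProbabilityTheory.mgf at h
  have e : ∀ x, Real.exp (t * (g x - ∫ y, g y ∂μ)) =
      Real.exp (t * g x) * Real.exp (-(t * ∫ y, g y ∂μ)) := by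
    intro x; rw [← Real.exp_add]; congr 1; ring
  simp only [e] at h
  rw [integral_mul_const, Real.exp_neg, mul_inv_le_iff₀ (Real.exp_pos _), ← Real.exp_add] at h
  refine h.trans_eq ?_
  congr 1
  simp only [add_sub_cancel_left, NNReal.coe_pow, NNReal.coe_div, coe_nnnorm, NNReal.coe_ofNat,
    Real.norm_eq_abs, div_pow, sq_abs]
  ring

/-- The exponential moment form of McDiarmid's inequality. -/
lemma mcdiarmid_mgf {X : Type*} [MeasurableSpace X] (μ : Measure X) [IsProbabilityMeasure μ]
    {c : ℝ} (t : ℝ) (n : ℕ) : ∀ (G : (Fin n → X) → ℝ), Measurable G → ∀ K : ℝ,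
    (∀ w, |G w| ≤ K) →
    (∀ (w w' : Fin n → X) (i : Fin n), (∀ j, j ≠ i → w j = w' j) → G w - G w' ≤ c) →
    ∫ w, Real.exp (t * G w) ∂(Measure.pi fun _ => μ) ≤
      Real.exp (t * ∫ w, G w ∂(Measure.pi fun _ => μ) + n * (c ^ 2 * t ^ 2 / 8)) := by
  induction n with
  | zero =>
    intro G _ K _ _
    have h : ∀ w, G w = G default := fun w => congrArg G (Subsingleton.elim _ _)
    simp only [h]
    simp
  | succ n ih =>
    intro G hG K hK hc
    set P : Measure (Fin n → X) := Measure.pi fun _ => μ with hP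
    have hmp : MeasurePreserving (MeasurableEquiv.piFinSuccAbove (fun _ : Fin (n + 1) => X) 0).symm
        (μ.prod P) (Measure.pi fun _ => μ) :=
      (measurePreserving_piFinSuccAbove (fun _ : Fin (n + 1) => μ) 0).symm
    set Φ := (MeasurableEquiv.piFinSuccAbove (fun _ : Fin (n + 1) => X) 0).symm with hΦ
    have hΦ0 : ∀ x w, Φ (x, w) 0 = x := fun x w => by
      simp [hΦ, MeasurableEquiv.piFinSuccAbove_symm_apply, Fin.insertNthEquiv]
    have hΦs : ∀ x w j, Φ (x, w) (Fin.succ j) = w j := fun x w j => by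
      simp [hΦ, MeasurableEquiv.piFinSuccAbove_symm_apply, Fin.insertNthEquiv]
    have hGΦ : Measurable fun p => G (Φ p) := hG.comp Φ.measurable
    have hI : Integrable (fun p => G (Φ p)) (μ.prod P) := integrable_of_abs_le hGΦ fun p => hK _
    have hIx : ∀ x, Integrable (fun w => G (Φ (x, w))) P := fun x =>
      integrable_of_abs_le (hGΦ.comp measurable_prodMk_left) fun p => hK _
    rw [← hmp.integral_comp' (fun w => Real.exp (t * G w)), ← hmp.integral_comp' G,
      integral_prod _ (integrable_exp hGΦ (fun p => hK _) t), integral_prod _ hI]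
    set g : X → ℝ := fun x => ∫ w, G (Φ (x, w)) ∂P with hg
    have hgm : Measurable g :=
      (hGΦ.stronglyMeasurable.integral_prod_right' (ν := P)).measurable
    have hgK : ∀ x, |g x| ≤ K := by
      intro x
      have := norm_integral_le_of_norm_le_const (μ := P) (f := fun w => G (Φ (x, w))) (C := K)
        (Filter.Eventually.of_forall fun w => hK _)
      simpa using this
    have hgc : ∀ x y, g x - g y ≤ c := by
      intro x y
      rw [hg]
      simp only
      rw [← integral_sub (hIx x) (hIx y)]
      have h1 : ∫ w, (G (Φ (x, w)) - G (Φ (y, w))) ∂P ≤ ∫ _w, c ∂P := by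
        refine integral_mono ((hIx x).sub (hIx y)) (integrable_const c) fun w => ?_
        refine hc _ _ 0 fun j hj => ?_
        obtain ⟨j, rfl⟩ := Fin.exists_succ_eq.2 hj
        rw [hΦs, hΦs]
      simpa using h1
    have h1 : ∀ x, ∫ w, Real.exp (t * G (Φ (x, w))) ∂P ≤
        Real.exp (t * g x) * Real.exp (n * (c ^ 2 * t ^ 2 / 8)) := by
      intro x
      rw [← Real.exp_add]
      refine ih (fun w => G (Φ (x, w))) (hGΦ.comp measurable_prodMk_left) K (fun w => hK _) ?_
      intro w w' i hw
      refine hc _ _ i.succ fun j hj => ?_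
      rcases Fin.eq_zero_or_eq_succ j with rfl | ⟨j, rfl⟩
      · rw [hΦ0, hΦ0]
      · rw [hΦs, hΦs]
        exact hw j fun h => hj (by rw [h])
    calc ∫ x, ∫ w, Real.exp (t * G (Φ (x, w))) ∂P ∂μ
        ≤ ∫ x, Real.exp (t * g x) * Real.exp (n * (c ^ 2 * t ^ 2 / 8)) ∂μ :=
          integral_mono (integrable_exp hGΦ (fun p => hK _) t).integral_prod_left
            ((integrable_exp hgm hgK t).mul_const _) h1
      _ = (∫ x, Real.exp (t * g x) ∂μ) * Real.exp (n * (c ^ 2 * t ^ 2 / 8)) :=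
          integral_mul_const _ _
      _ ≤ Real.exp (t * ∫ x, g x ∂μ + c ^ 2 * t ^ 2 / 8) *
            Real.exp (n * (c ^ 2 * t ^ 2 / 8)) :=
          mul_le_mul_of_nonneg_right (hoeffding_osc μ hgm hgc t) (Real.exp_pos _).le
      _ = _ := by
          rw [← Real.exp_add]
          congr 1
          push_cast
          ring

/-- McDiarmid's inequality, for differences at most `M / n`. -/
lemma mcdiarmid {X : Type*} [MeasurableSpace X] (μ : Measure X) [IsProbabilityMeasure μ]
    {n : ℕ} (hn : 0 < n) {M : ℝ} (hM : 0 < M) (G : (Fin n → X) → ℝ) (hG : Measurable G) {K : ℝ}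
    (hK : ∀ w, |G w| ≤ K)
    (hc : ∀ (w w' : Fin n → X) (i : Fin n), (∀ j, j ≠ i → w j = w' j) → G w - G w' ≤ M / n)
    {δ : ℝ} (h0 : 0 < δ) (h1 : δ < 1) :
    (Measure.pi fun _ : Fin n => μ).real
      {w | ∫ w, G w ∂(Measure.pi fun _ => μ) + M * Real.sqrt (Real.log (1 / δ) / (2 * n)) ≤ G w}
      ≤ δ := by
  set P : Measure (Fin n → X) := Measure.pi fun _ => μ
  have hn' : (0 : ℝ) < n := by exact_mod_cast hn
  set L := Real.log (1 / δ) with hL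
  have hL0 : 0 ≤ L := Real.log_nonneg (by rw [le_div_iff₀ h0]; linarith)
  set s := Real.sqrt (L / (2 * n)) with hs
  have hs2 : s ^ 2 = L / (2 * n) := Real.sq_sqrt (by positivity)
  -- The minimizer of the Chernoff exponent.
  set t := 4 * n * s / M with ht
  have ht0 : 0 ≤ t := by positivity
  have h := ProbabilityTheory.measure_ge_le_exp_mul_mgf (μ := P) (X := G)
    (∫ w, G w ∂P + M * s) ht0 (integrable_exp hG hK t)
  refine h.trans ?_
  unfold ProbabilityTheory.mgf
  refine (mul_le_mul_of_nonneg_left (mcdiarmid_mgf μ t n G hG K hK hc)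
    (Real.exp_pos _).le).trans ?_
  rw [← Real.exp_add]
  have e : -t * (∫ w, G w ∂P + M * s) + (t * ∫ w, G w ∂P + n * ((M / n) ^ 2 * t ^ 2 / 8)) =
      -(2 * n * s ^ 2) := by
    rw [ht]; field_simp; ring
  rw [e, hs2, mul_div_cancel₀ _ (by positivity), hL, one_div, Real.log_inv, neg_neg,
    Real.exp_log h0]

/-! ### Symmetrization and the bound for finite classes -/

/-- Exchanging the `i`-th points of two independent samples whenever `e i` is false. -/
def swap {X : Type*} {m : ℕ} (e : Fin m → Bool) (p : (Fin m → X) × (Fin m → X)) :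
    (Fin m → X) × (Fin m → X) :=
  (fun i => if e i then p.1 i else p.2 i, fun i => if e i then p.2 i else p.1 i)

lemma swap_measurePreserving {X : Type*} [MeasurableSpace X] (μ : Measure X)
    [IsProbabilityMeasure μ] {m : ℕ} (e : Fin m → Bool) :
    MeasurePreserving (swap e)
      ((Measure.pi fun _ : Fin m => μ).prod (Measure.pi fun _ : Fin m => μ))
      ((Measure.pi fun _ : Fin m => μ).prod (Measure.pi fun _ : Fin m => μ)) := by
  let τ : Fin m ⊕ Fin m → Fin m ⊕ Fin m :=
    Sum.elim (fun i => if e i then .inl i else .inr i) (fun i => if e i then .inr i else .inl i)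
  have hτ : Function.Involutive τ := by
    rintro (i | i) <;> cases h : e i <;> simp [τ, h]
  have h1 := measurePreserving_sumPiEquivProdPi (fun _ : Fin m ⊕ Fin m => μ)
  have h2 := measurePreserving_piCongrLeft (fun _ : Fin m ⊕ Fin m => μ) hτ.toPerm
  have h3 := (h1.comp h2).comp h1.symm
  convert h3 using 1
  funext p
  have key : ∀ q : Fin m ⊕ Fin m → X, ∀ i, Equiv.piCongrLeft (fun _ => X) hτ.toPerm q i =
      q (τ i) := by
    intro q i
    have := Equiv.piCongrLeft_apply_apply (fun _ => X) hτ.toPerm q (τ i)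
    rwa [Function.Involutive.coe_toPerm, hτ i] at this
  refine Prod.ext (funext fun i => ?_) (funext fun i => ?_)
  · change _ = Equiv.piCongrLeft (fun _ => X) hτ.toPerm
      ((MeasurableEquiv.sumPiEquivProdPi _).symm p) (.inl i)
    rw [key]
    cases h : e i <;> simp [swap, τ, h, MeasurableEquiv.sumPiEquivProdPi]
  · change _ = Equiv.piCongrLeft (fun _ => X) hτ.toPerm
      ((MeasurableEquiv.sumPiEquivProdPi _).symm p) (.inr i)
    rw [key]
    cases h : e i <;> simp [swap, τ, h, MeasurableEquiv.sumPiEquivProdPi]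

lemma abs_sup_le {J : Type*} [Finite J] [Nonempty J] {f : J → ℝ} {K : ℝ} (h : ∀ j, |f j| ≤ K) :
    |⨆ j, f j| ≤ K := by
  obtain ⟨j, hj⟩ := exists_sup f
  rw [← hj]
  exact h j

lemma abs_sum_le {m : ℕ} {f : Fin m → ℝ} {K : ℝ} (h : ∀ i, |f i| ≤ K) : |∑ i, f i| ≤ m * K := by
  refine (Finset.abs_sum_le_sum_abs _ _).trans ?_
  refine (Finset.sum_le_sum fun i _ => h i).trans_eq ?_
  simp

/-- Symmetrization: the expected supremum of the sample deviations is at most twice the Rademacher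
average. -/
lemma symmetrization {X J : Type*} [MeasurableSpace X] (μ : Measure X) [IsProbabilityMeasure μ]
    [Finite J] [Nonempty J] {m : ℕ} {M : ℝ} (f : J → X → ℝ)
    (hf : ∀ j, Measurable (f j)) (hfM : ∀ j x, |f j x| ≤ M) {r : ℝ}
    (hr : ∀ᵐ w ∂(Measure.pi fun _ : Fin m => μ),
      𝔼 e : Fin m → Bool, (⨆ j, ∑ i, sg (e i) * f j (w i)) ≤ r) :
    ∫ w, (⨆ j, ∑ i, (∫ x, f j x ∂μ - f j (w i))) ∂(Measure.pi fun _ : Fin m => μ) ≤ 2 * r := by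
  set P : Measure (Fin m → X) := Measure.pi fun _ => μ with hP
  have hfi : ∀ j i, Measurable fun w : Fin m → X => f j (w i) := fun j i =>
    (hf j).comp (measurable_pi_apply i)
  let S : (Fin m → X) × (Fin m → X) → ℝ := fun p => ⨆ j, ∑ i, (f j (p.2 i) - f j (p.1 i))
  have hSm : Measurable S := Measurable.iSup fun j => Finset.measurable_sum _ fun i _ =>
    ((hfi j i).comp measurable_snd).sub ((hfi j i).comp measurable_fst)
  have hSb : ∀ p, |S p| ≤ m * (M + M) := fun p => abs_sup_le fun j => abs_sum_le fun i =>
    (abs_sub _ _).trans (add_le_add (hfM _ _) (hfM _ _))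
  have hSI : Integrable S (P.prod P) := integrable_of_abs_le hSm hSb
  let q : (Fin m → Bool) → (Fin m → X) → ℝ := fun e w => ⨆ j, ∑ i, sg (e i) * f j (w i)
  have hqm : ∀ e, Measurable (q e) := fun e => Measurable.iSup fun j =>
    Finset.measurable_sum _ fun i _ => (hfi j i).const_mul _
  have hqb : ∀ e w, |q e w| ≤ m * M := fun e w => abs_sup_le fun j => abs_sum_le fun i => by
    rw [abs_mul, abs_sg, one_mul]; exact hfM _ _
  have hqI : ∀ e, Integrable (q e) P := fun e => integrable_of_abs_le (hqm e) (hqb e)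
  -- Conditioning: the expectation of `f j` is an average over an independent sample.
  have step1 : ∫ w, (⨆ j, ∑ i, (∫ x, f j x ∂μ - f j (w i))) ∂P ≤ ∫ p, S p ∂(P.prod P) := by
    rw [integral_prod _ hSI]
    refine integral_mono (integrable_of_abs_le (K := m * (M + M)) ?_ ?_)
      hSI.integral_prod_left fun w => ?_
    · exact Measurable.iSup fun j => Finset.measurable_sum _ fun i _ =>
        measurable_const.sub (hfi j i)
    · refine fun w => abs_sup_le fun j => abs_sum_le fun i =>
        (abs_sub _ _).trans (add_le_add ?_ (hfM _ _))
      have := norm_integral_le_of_norm_le_const (μ := μ) (f := f j) (C := M)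
        (Filter.Eventually.of_forall fun w => hfM j w)
      simpa using this
    · refine ciSup_le fun j => ?_
      have hfint : ∀ i, Integrable (fun w' : Fin m → X => f j (w' i)) P := fun i =>
        integrable_of_abs_le (hfi j i) fun w' => hfM _ _
      have e1 : ∑ i, (∫ x, f j x ∂μ - f j (w i)) =
          ∫ w', ∑ i, (f j (w' i) - f j (w i)) ∂P := by
        have hd : ∀ i, Integrable (fun w' : Fin m → X => f j (w' i) - f j (w i)) P := fun i =>
          (hfint i).sub (integrable_const _)
        rw [integral_finsetSum _ fun i _ => hd i]
        refine Finset.sum_congr rfl fun i _ => ?_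
        rw [integral_sub (hfint i) (integrable_const _), integral_const,
          integral_comp_eval (μ := fun _ : Fin m => μ) (hf j).aestronglyMeasurable]
        simp
      rw [e1]
      refine integral_mono (integrable_finsetSum _ fun i _ => (hfint i).sub (integrable_const _))
        (integrable_of_abs_le (hSm.comp measurable_prodMk_left) fun w' => hSb _) fun w' => ?_
      exact le_sup (fun j => ∑ i, (f j (w' i) - f j (w i))) j
  have step2 : ∀ e : Fin m → Bool,
      ∫ p, S p ∂(P.prod P) ≤ ∫ w, q e w ∂P + ∫ w, q (fun i => !e i) w ∂P := by
    intro e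
    have hmp := swap_measurePreserving μ e
    have e1 : ∫ p, S p ∂(P.prod P) = ∫ p, S (swap e p) ∂(P.prod P) := by
      rw [← integral_map (φ := swap e) (f := S) hmp.measurable.aemeasurable
        hSm.aestronglyMeasurable, hmp.map_eq]
    have e2 : ∫ w, q e w ∂P = ∫ p : (Fin m → X) × (Fin m → X), q e p.2 ∂(P.prod P) := by
      rw [integral_fun_snd]; simp
    have e3 : ∫ w, q (fun i => !e i) w ∂P =
        ∫ p : (Fin m → X) × (Fin m → X), q (fun i => !e i) p.1 ∂(P.prod P) := by
      rw [integral_fun_fst]; simp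
    have i2 : Integrable (fun p : (Fin m → X) × (Fin m → X) => q e p.2) (P.prod P) :=
      integrable_of_abs_le ((hqm e).comp measurable_snd) fun p => hqb _ _
    have i3 : Integrable (fun p : (Fin m → X) × (Fin m → X) => q (fun i => !e i) p.1)
        (P.prod P) :=
      integrable_of_abs_le ((hqm _).comp measurable_fst) fun p => hqb _ _
    rw [e1, e2, e3, ← integral_add i2 i3]
    refine integral_mono (integrable_of_abs_le (hSm.comp hmp.measurable) fun p => hSb _)
      (i2.add i3) fun p => ciSup_le fun j => ?_
    have e4 : ∑ i, (f j ((swap e p).2 i) - f j ((swap e p).1 i)) =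
        ∑ i, sg (e i) * f j (p.2 i) + ∑ i, sg (!e i) * f j (p.1 i) := by
      rw [← Finset.sum_add_distrib]
      refine Finset.sum_congr rfl fun i _ => ?_
      cases h : e i <;> simp [swap, h, sg] <;> ring
    rw [e4]
    exact add_le_add (le_sup (fun j => ∑ i, sg (e i) * f j (p.2 i)) j)
      (le_sup (fun j => ∑ i, sg (!e i) * f j (p.1 i)) j)
  have step3 : ∫ p, S p ∂(P.prod P) ≤ 2 * 𝔼 e, ∫ w, q e w ∂P := by
    have h1 := expect_mono step2
    rw [Fintype.expect_const, Finset.expect_add_distrib] at h1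
    have h2 : 𝔼 e : Fin m → Bool, ∫ w, q (fun i => !e i) w ∂P = 𝔼 e, ∫ w, q e w ∂P :=
      Fintype.expect_equiv (Equiv.piCongrRight fun _ => Equiv.boolNot) _ _ fun e => rfl
    rw [h2] at h1
    linarith
  have step4 : 𝔼 e, ∫ w, q e w ∂P ≤ r := by
    have h1 : 𝔼 e, ∫ w, q e w ∂P = ∫ w, 𝔼 e, q e w ∂P := by
      simp only [Fintype.expect_eq_sum_div_card]
      rw [integral_div, integral_finsetSum _ fun e _ => hqI e]
    rw [h1]
    have h2 : ∫ w, 𝔼 e, q e w ∂P ≤ ∫ _w, r ∂P := by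
      refine integral_mono_ae ?_ (integrable_const r) hr
      simp only [Fintype.expect_eq_sum_div_card]
      exact (integrable_finsetSum _ fun e _ => hqI e).div_const _
    simpa using h2
  linarith

/-- Uniform deviation bound for a finite class of functions with values in `[0, M]`. -/
lemma finite_class {X J : Type*} [MeasurableSpace X] (μ : Measure X) [IsProbabilityMeasure μ]
    [Finite J] [Nonempty J] {m : ℕ} (hm : 0 < m) {M : ℝ} (hM : 0 < M) (f : J → X → ℝ)
    (hf : ∀ j, Measurable (f j)) (hfM : ∀ j x, f j x ∈ Set.Icc 0 M) {r : ℝ}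
    (hr : ∀ᵐ w ∂(Measure.pi fun _ : Fin m => μ),
      𝔼 e : Fin m → Bool, (⨆ j, ∑ i, sg (e i) * f j (w i)) ≤ m * r)
    {δ : ℝ} (h0 : 0 < δ) (h1 : δ < 1) :
    (Measure.pi fun _ : Fin m => μ)
      {w | ∃ j, 2 * r + M * Real.sqrt (Real.log (1 / δ) / (2 * m)) <
        ∫ x, f j x ∂μ - (1 / (m : ℝ)) * ∑ i, f j (w i)} ≤ ENNReal.ofReal δ := by
  set P : Measure (Fin m → X) := Measure.pi fun _ => μ with hP
  have hm' : (0 : ℝ) < m := by exact_mod_cast hm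
  have habs : ∀ j x, |f j x| ≤ M := fun j x => by
    rw [abs_of_nonneg (hfM j x).1]; exact (hfM j x).2
  have hfi : ∀ j i, Measurable fun w : Fin m → X => f j (w i) := fun j i =>
    (hf j).comp (measurable_pi_apply i)
  let G : (Fin m → X) → ℝ := fun w => (1 / (m : ℝ)) * ⨆ j, ∑ i, (∫ x, f j x ∂μ - f j (w i))
  have hGm : Measurable G := (Measurable.iSup fun j => Finset.measurable_sum _ fun i _ =>
    measurable_const.sub (hfi j i)).const_mul _
  have hGb : ∀ w, |G w| ≤ (1 / (m : ℝ)) * (m * (M + M)) := by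
    intro w
    rw [abs_mul, abs_of_pos (show 0 < 1 / (m : ℝ) by positivity)]
    refine mul_le_mul_of_nonneg_left (abs_sup_le fun j => abs_sum_le fun i =>
        (abs_sub _ _).trans (add_le_add ?_ (habs _ _))) (by positivity)
    have := norm_integral_le_of_norm_le_const (μ := μ) (f := f j) (C := M)
      (Filter.Eventually.of_forall fun w => habs j w)
    simpa using this
  have hGc : ∀ (w w' : Fin m → X) (i : Fin m), (∀ j, j ≠ i → w j = w' j) →
      G w - G w' ≤ M / m := by
    intro w w' i hw
    simp only [G]
    rw [← mul_sub, one_div, inv_mul_le_iff₀ hm', mul_div_cancel₀ _ hm'.ne']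
    obtain ⟨j, hj⟩ := exists_sup fun j => ∑ i, (∫ x, f j x ∂μ - f j (w i))
    rw [← hj]
    have h2 := le_sup (fun j => ∑ i, (∫ x, f j x ∂μ - f j (w' i))) j
    have h3 : ∑ i, (∫ x, f j x ∂μ - f j (w i)) - ∑ i, (∫ x, f j x ∂μ - f j (w' i)) =
        f j (w' i) - f j (w i) := by
      rw [← Finset.sum_sub_distrib, Finset.sum_eq_single i]
      · ring
      · intro k _ hk; rw [hw k hk]; ring
      · simp
    have := (hfM j (w i)).1
    have := (hfM j (w' i)).2
    linarith
  have hEG : ∫ w, G w ∂P ≤ 2 * r := by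
    simp only [G]
    rw [integral_const_mul, one_div, inv_mul_le_iff₀ hm']
    have := symmetrization μ f hf habs hr
    linarith
  have h := mcdiarmid μ hm hM G hGm hGb hGc h0 h1
  rw [← ENNReal.ofReal_toReal (measure_ne_top P _)]
  refine ENNReal.ofReal_le_ofReal (le_trans ?_ h)
  refine measureReal_mono ?_
  rintro w ⟨j, hj⟩
  have h2 := le_sup (fun j => ∑ i, (∫ x, f j x ∂μ - f j (w i))) j
  have h3 : ∫ x, f j x ∂μ - (1 / (m : ℝ)) * ∑ i, f j (w i) ≤ G w := by
    simp only [G]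
    refine le_trans (le_of_eq ?_) (mul_le_mul_of_nonneg_left h2 (by positivity))
    rw [Finset.sum_sub_distrib, Finset.sum_const, Finset.card_univ, Fintype.card_fin,
      nsmul_eq_mul]
    field_simp
  change ∫ w, G w ∂P + _ ≤ G w
  linarith

/-! ### The bound for the whole class -/

lemma hid_continuous {d₀ : ℕ} (N : Net d₀) (k : ℕ) (hL : ∀ i < k, LipschitzWith 1 (N.σ i)) :
    Continuous (N.hid k) := by
  induction k with
  | zero => exact continuous_pi fun l => continuous_apply _
  | succ k ih =>
    refine continuous_pi fun r => (hL k (by omega)).continuous.comp ?_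
    have := ih fun i hi => hL i (by omega)
    exact continuous_finsetSum _ fun l _ => continuous_const.mul ((continuous_apply l).comp this)

lemma tclass_pos {C d₀ d : ℕ} {Mw : Fin d → ℝ} {T : (Fin d₀ → ℝ) → Fin C → Fin C → ℝ}
    (hT : T ∈ TClass C d₀ d Mw) (x : Fin d₀ → ℝ) (p q : Fin C) : 0 < T x p q := by
  obtain ⟨dims, h0, hd, W, σ, -, -, -, hT⟩ := hT
  rw [hT]
  exact div_pos (Real.exp_pos _) (Finset.sum_pos (fun _ _ => Real.exp_pos _) ⟨q, Finset.mem_univ q⟩)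

lemma tclass_continuous {C d₀ d : ℕ} (hd : 0 < d) {Mw : Fin d → ℝ}
    {T : (Fin d₀ → ℝ) → Fin C → Fin C → ℝ} (hT : T ∈ TClass C d₀ d Mw) : Continuous T := by
  obtain ⟨k, rfl⟩ : ∃ k, d = k + 1 := ⟨d - 1, by omega⟩
  obtain ⟨N, U, -, -, hL, -, hTe⟩ := exists_net hT
  have hN := hid_continuous N k hL
  have hexp : ∀ p, Continuous fun x => Real.exp (∑ l, U p l * N.hid k x l) := fun p =>
    Real.continuous_exp.comp (continuous_finsetSum _ fun l _ =>
      continuous_const.mul ((continuous_apply l).comp hN))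
  refine continuous_pi fun p => continuous_pi fun q => ?_
  simp only [hTe]
  exact (hexp _).div (continuous_finsetSum _ fun c _ => hexp _) fun x =>
    (Finset.sum_pos (fun _ _ => Real.exp_pos _) ⟨q, Finset.mem_univ q⟩).ne'

lemma transLoss_measurable {C d₀ : ℕ} {T : (Fin d₀ → ℝ) → Fin C → Fin C → ℝ} (hT : Continuous T) :
    Measurable (transLoss T) := by
  refine measurable_from_prod_countable_left fun pq => ?_
  have : Measurable fun x => T x pq.2 pq.1 :=
    ((continuous_apply pq.1).comp ((continuous_apply pq.2).comp hT)).measurable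
  exact (Real.measurable_log.comp this).neg

/-- The uniform deviation bound over the whole class. `TClass` is a subspace of the second-countable
space of continuous functions, so a dense sequence of hypotheses reduces it to finite subclasses;
the risk passes to limits by dominated convergence. -/
lemma uniform_bound {C d₀ d : ℕ} (hC : 0 < C) (hd : 0 < d) {B M : ℝ} (hB : 0 < B) (hM : 0 < M)
    {Mw : Fin d → ℝ} (hMw : ∀ i, 0 < Mw i)
    (D : Measure ((Fin d₀ → ℝ) × Fin C × Fin C)) [IsProbabilityMeasure D]
    (hsupp : ∀ᵐ z ∂D, euclNorm z.1 ≤ B)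
    (hloss : ∀ᵐ z ∂D, ∀ T ∈ TClass C d₀ d Mw, 0 ≤ transLoss T z ∧ transLoss T z ≤ M)
    {m : ℕ} (hm : 0 < m) {δ : ℝ} (h0 : 0 < δ) (h1 : δ < 1) {r : ℝ}
    (hr : r = (C : ℝ) ^ 2 * B * Real.sqrt (2 * d * Real.log 2) * (∏ i, Mw i) /
        Real.sqrt (C * m)) :
    (Measure.pi fun _ : Fin m => D)
      {w | ∀ T ∈ TClass C d₀ d Mw,
        (∫ z, transLoss T z ∂D) - (1 / (m : ℝ)) * ∑ i, transLoss T (w i) ≤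
          2 * r + M * Real.sqrt (Real.log (1 / δ) / (2 * m))}ᶜ ≤ ENNReal.ofReal δ := by
  set P : Measure (Fin m → (Fin d₀ → ℝ) × Fin C × Fin C) := Measure.pi fun _ => D with hP
  set K := 2 * r + M * Real.sqrt (Real.log (1 / δ) / (2 * m)) with hK
  -- The class as a subspace of a second-countable space of continuous functions.
  let A : Set C(Fin d₀ → ℝ, Fin C → Fin C → ℝ) := {g | ⇑g ∈ TClass C d₀ d Mw}
  rcases isEmpty_or_nonempty A with hA | hA
  · refine le_trans (le_of_eq ?_) zero_le
    convert measure_empty (μ := P)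
    rw [Set.compl_empty_iff, Set.eq_univ_iff_forall]
    intro w T hT
    exact (hA.false ⟨⟨T, tclass_continuous hd hT⟩, hT⟩).elim
  let u : ℕ → A := TopologicalSpace.denseSeq A
  let f : ℕ → (Fin d₀ → ℝ) × Fin C × Fin C → ℝ := fun n z =>
    max 0 (min M (transLoss (u n).1 z))
  have hfm : ∀ n, Measurable (f n) := fun n =>
    measurable_const.max (measurable_const.min (transLoss_measurable (u n).1.continuous))
  have hf01 : ∀ n z, f n z ∈ Set.Icc 0 M := fun n z =>
    ⟨le_max_left _ _, max_le hM.le (min_le_left _ _)⟩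
  have hfeq : ∀ z, (∀ T ∈ TClass C d₀ d Mw, 0 ≤ transLoss T z ∧ transLoss T z ≤ M) →
      ∀ n, f n z = transLoss (u n).1 z := by
    intro z hz n
    have := hz _ (u n).2
    simp only [f]
    rw [min_eq_right this.2, max_eq_right this.1]
  have hgood : ∀ᵐ w ∂P, ∀ i, euclNorm (w i).1 ≤ B ∧
      ∀ T ∈ TClass C d₀ d Mw, 0 ≤ transLoss T (w i) ∧ transLoss T (w i) ≤ M := by
    rw [ae_all_iff]
    intro i
    exact (measurePreserving_eval (fun _ : Fin m => D) i).quasiMeasurePreserving.ae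
      (hsupp.and hloss)
  let bad : ℕ → Set (Fin m → (Fin d₀ → ℝ) × Fin C × Fin C) := fun n =>
    {w | ∃ j : Fin (n + 1), K < ∫ z, f j z ∂D - (1 / (m : ℝ)) * ∑ i, f j (w i)}
  have hbad : ∀ n, P (bad n) ≤ ENNReal.ofReal δ := by
    intro n
    refine finite_class D hm hM (fun j : Fin (n + 1) => f j) (fun j => hfm j)
      (fun j => hf01 j) ?_ h0 h1
    filter_upwards [hgood] with w hw
    have := rad_bound hC hd hm hB hMw (fun j : Fin (n + 1) => ⇑(u j).1) (fun j => (u j).2) w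
      fun i => (hw i).1
    rw [← hr] at this
    simpa only [hfeq _ (hw _).2] using this
  have hmono : Monotone bad := by
    rintro a b hab w ⟨j, hj⟩
    exact ⟨⟨j, by omega⟩, hj⟩
  have hunion : P (⋃ n, bad n) ≤ ENNReal.ofReal δ := by
    rw [hmono.measure_iUnion]
    exact iSup_le hbad
  refine le_trans (measure_mono_ae ?_) hunion
  filter_upwards [hgood] with w hw hnot
  by_contra hnb
  refine hnot fun T hT => ?_
  have hpt : ∀ z, Continuous fun g : A => transLoss g.1 z := by
    intro z
    have h2 : Continuous fun g : A => g.1 z.1 z.2.2 z.2.1 :=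
      (continuous_apply _).comp ((continuous_apply _).comp
        ((continuous_eval_const z.1).comp continuous_subtype_val))
    exact (h2.log fun g => (tclass_pos g.2 _ _ _).ne').neg
  have hfint : Continuous fun g : A => ∫ z, transLoss g.1 z ∂D := by
    refine continuous_of_dominated (bound := fun _ => M)
      (fun g => (transLoss_measurable g.1.continuous).aestronglyMeasurable) (fun g => ?_)
      (integrable_const M) (Filter.Eventually.of_forall hpt)
    filter_upwards [hloss] with z hz
    rw [Real.norm_eq_abs, abs_of_nonneg (hz _ g.2).1]
    exact (hz _ g.2).2
  have hclosed : IsClosed {g : A | (∫ z, transLoss g.1 z ∂D) -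
      (1 / (m : ℝ)) * ∑ i, transLoss g.1 (w i) ≤ K} :=
    isClosed_le (hfint.sub (continuous_const.mul
      (continuous_finsetSum _ fun i _ => hpt (w i)))) continuous_const
  have hsub : Set.range u ⊆ {g : A | (∫ z, transLoss g.1 z ∂D) -
      (1 / (m : ℝ)) * ∑ i, transLoss g.1 (w i) ≤ K} := by
    rintro _ ⟨n, rfl⟩
    change (∫ z, transLoss (u n).1 z ∂D) - (1 / (m : ℝ)) * ∑ i, transLoss (u n).1 (w i) ≤ K
    by_contra hlt
    refine hnb (Set.mem_iUnion.2 ⟨n, ⟨n, n.lt_succ_self⟩, ?_⟩)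
    have e1 : ∫ z, f n z ∂D = ∫ z, transLoss (u n).1 z ∂D :=
      integral_congr_ae (by filter_upwards [hloss] with z hz using hfeq z hz n)
    have e2 : ∑ i, f n (w i) = ∑ i, transLoss (u n).1 (w i) :=
      Finset.sum_congr rfl fun i _ => hfeq _ (hw i).2 n
    rw [← e1, ← e2] at hlt
    exact not_le.1 hlt
  have hall := (TopologicalSpace.denseRange_denseSeq A).closure_range
  have := hclosed.closure_subset_iff.2 hsub
  rw [hall] at this
  exact this (Set.mem_univ (⟨⟨T, tclass_continuous hd hT⟩, hT⟩ : A))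

end TransBound

/-- Generalization error bound without knowledge transfer (Theorem 1): with probability
at least `1 − δ` over an i.i.d. sample of size `m` from `D`, if the sample is
class-balanced w.r.t. the Bayes labels `y⋆` (each class appears exactly `m / C` times),
then simultaneously for every `T ∈ 𝒯`,
`E_D[ℓ(T)] − (1/m) ∑ᵢ ℓ(T; xᵢ, ȳᵢ, y⋆ᵢ)
  ≤ 2C²B(√(2d·log 2) + 1)·∏ᵢ Mᵢ / √(C·m) + M·√(log(1/δ)/(2m))`. -/
theorem generalization_bound_without_transfer
    (C d₀ d : ℕ) (hC : 0 < C) (hd : 0 < d)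
    (B M : ℝ) (hB : 0 < B) (hM : 0 < M)
    (Mw : Fin d → ℝ) (hMw : ∀ i, 0 < Mw i)
    (D : Measure ((Fin d₀ → ℝ) × Fin C × Fin C)) [IsProbabilityMeasure D]
    (hsupp : ∀ᵐ z ∂D, euclNorm z.1 ≤ B)
    (hloss : ∀ᵐ z ∂D, ∀ T ∈ TClass C d₀ d Mw, 0 ≤ transLoss T z ∧ transLoss T z ≤ M)
    (m : ℕ) (hm : 0 < m) (δ : ℝ) (hδ : δ ∈ Set.Ioo (0 : ℝ) 1) :
    ENNReal.ofReal (1 - δ) ≤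
      (Measure.pi fun _ : Fin m => D)
        {ω : Fin m → (Fin d₀ → ℝ) × Fin C × Fin C |
          (∀ k : Fin C,
              (Finset.univ.filter fun i : Fin m => (ω i).2.2 = k).card * C = m) →
            ∀ T ∈ TClass C d₀ d Mw,
              (∫ z, transLoss T z ∂D) - (1 / (m : ℝ)) * ∑ i, transLoss T (ω i) ≤
                2 * (C : ℝ) ^ 2 * B * (Real.sqrt (2 * (d : ℝ) * Real.log 2) + 1) *
                    (∏ i, Mw i) / Real.sqrt ((C : ℝ) * m) +
                  M * Real.sqrt (Real.log (1 / δ) / (2 * m))} := by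
  obtain ⟨h0, h1⟩ := hδ
  set P : Measure (Fin m → (Fin d₀ → ℝ) × Fin C × Fin C) := Measure.pi fun _ => D
  have hbad := TransBound.uniform_bound hC hd hB hM hMw D hsupp hloss hm h0 h1 rfl
  rw [ENNReal.ofReal_sub 1 h0.le, ENNReal.ofReal_one, tsub_le_iff_right, ← measure_univ (μ := P)]
  refine (measure_univ_le_add_compl _).trans (add_le_add (measure_mono ?_) hbad)
  intro w hw _ T hT
  refine (hw T hT).trans ?_
  have hprod : 0 < ∏ i, Mw i := Finset.prod_pos fun i _ => hMw i
  rw [mul_div_assoc']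
  refine add_le_add (div_le_div_of_nonneg_right ?_ (Real.sqrt_nonneg _)) le_rfl
  have : 0 ≤ 2 * (C : ℝ) ^ 2 * B * (∏ i, Mw i) := by positivity
  linarith
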